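/- Let N be a polyhedral norm on ℝ^m (a norm whose closed unit ball has finitely many extreme points), X a nonempty compact subset of ℝ^m, I and J finite nonempty sets, q : X × I × J → X a deterministic commutative transition such that q(·, i, j) is 1-Lipschitz with respect to N for every (i,j) ∈ I × J, and g : X × I × J → [0,1] such that g(·, i, j) is continuous for every (i,j). Then for every initial state x₁ ∈ X the stochastic game Γ(x₁) has a uniform value. -/

import Mathlib

open Filter Topology

noncomputable section

/-- Expected total payoff over `n` stages in a deterministic two-player stochastic game, when
player 1 uses the behavioral strategy `σ`, player 2 uses `τ`, the current state is `x` and the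
past history (sequence of action pairs) is `h`. At each stage the two actions are drawn
independently according to `σ h` and `τ h`. -/
def expPay {X I J : Type*} [Fintype I] [Fintype J]
    (q : X → I → J → X) (g : X → I → J → ℝ)
    (σ : List (I × J) → PMF I) (τ : List (I × J) → PMF J) :
    ℕ → X → List (I × J) → ℝ
  | 0, _, _ => 0
  | n + 1, x, h => ∑ i : I, ∑ j : J, ((σ h) i).toReal * ((τ h) j).toReal *
      (g x i j + expPay q g σ τ n (q x i j) (h ++ [(i, j)]))

/-- The `n`-stage average expected payoff `γ_n(x₁, σ, τ)`. -/
def gamePayoff {X I J : Type*} [Fintype I] [Fintype J]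
    (q : X → I → J → X) (g : X → I → J → ℝ)
    (σ : List (I × J) → PMF I) (τ : List (I × J) → PMF J) (x₁ : X) (n : ℕ) : ℝ :=
  (1 / (n : ℝ)) * expPay q g σ τ n x₁ []

/-- Player 1 guarantees `w` in the game `Γ(x₁)`. -/
def Guarantees1 {X I J : Type*} [Fintype I] [Fintype J]
    (q : X → I → J → X) (g : X → I → J → ℝ) (x₁ : X) (w : ℝ) : Prop :=
  ∀ ε > (0 : ℝ), ∃ (σ : List (I × J) → PMF I) (N : ℕ),
    ∀ (τ : List (I × J) → PMF J), ∀ n ≥ N, w - ε ≤ gamePayoff q g σ τ x₁ n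

/-- Player 2 guarantees `w` in the game `Γ(x₁)`. -/
def Guarantees2 {X I J : Type*} [Fintype I] [Fintype J]
    (q : X → I → J → X) (g : X → I → J → ℝ) (x₁ : X) (w : ℝ) : Prop :=
  ∀ ε > (0 : ℝ), ∃ (τ : List (I × J) → PMF J) (N : ℕ),
    ∀ (σ : List (I × J) → PMF I), ∀ n ≥ N, gamePayoff q g σ τ x₁ n ≤ w + ε

/-!
For a polyhedral norm, every orbit of a nonexpansive self-map `T` of a compact set is almost
eventually periodic. Indeed `T` acts isometrically on its limit set, the norm is a maximum of
finitely many functionals, and, by pigeonhole on the functionals that attain the distances along an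
orbit, arbitrarily small balls are revisited along whole arithmetic progressions.

Since the transitions commute, the state only depends on how often each action pair has been
played, and almost periodicity allows these counters to be folded onto finite cycles at the cost of
an error `ε`. The game is therefore within `ε` of a game with finitely many states.

A finite game has a uniform value by the theorem of Mertens and Neyman. Its input is the bounded
variation of the discounted values in the discount factor `l`: the inequality `c < v_l(s)` amounts
to the solvability of a linear system whose coefficients are polynomials in `l` of bounded degree,
by Fourier–Motzkin elimination its truth value changes boundedly often, uniformly in `c`, and
integrating over `c` bounds the variation.
-/

/-! ### Matrix games and discounted values -/

section MatrixGame

variable {I J : Type*} [Fintype I] [Fintype J]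

/-- `v` is the value in mixed strategies of the matrix game `A`, in which the row player `I`
maximizes. -/
def IsMatrixValue (A : I → J → ℝ) (v : ℝ) : Prop :=
  (∃ x ∈ stdSimplex ℝ I, ∀ j, v ≤ ∑ i, x i * A i j) ∧
    ∃ y ∈ stdSimplex ℝ J, ∀ i, ∑ j, y j * A i j ≤ v

theorem sum_mul_le_of_mem_stdSimplex {x f : I → ℝ} {c : ℝ} (hx : x ∈ stdSimplex ℝ I)
    (h : ∀ i, f i ≤ c) : ∑ i, x i * f i ≤ c :=
  calc ∑ i, x i * f i ≤ ∑ i, x i * c :=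
        Finset.sum_le_sum fun i _ => mul_le_mul_of_nonneg_left (h i) (hx.1 i)
    _ = c := by rw [← Finset.sum_mul, hx.2, one_mul]

theorem le_sum_mul_of_mem_stdSimplex {x f : I → ℝ} {c : ℝ} (hx : x ∈ stdSimplex ℝ I)
    (h : ∀ i, c ≤ f i) : c ≤ ∑ i, x i * f i :=
  calc c = ∑ i, x i * c := by rw [← Finset.sum_mul, hx.2, one_mul]
    _ ≤ ∑ i, x i * f i :=
        Finset.sum_le_sum fun i _ => mul_le_mul_of_nonneg_left (h i) (hx.1 i)

theorem sum_mul_const_sub_of_mem_stdSimplex {x : I → ℝ} (hx : x ∈ stdSimplex ℝ I) (c : ℝ)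
    (f : I → ℝ) : ∑ i, x i * (c - f i) = c - ∑ i, x i * f i := by
  simp only [mul_sub, Finset.sum_sub_distrib, ← Finset.sum_mul, hx.2, one_mul]

theorem exists_isMatrixValue [Nonempty I] [Nonempty J] (A : I → J → ℝ) :
    ∃ v, IsMatrixValue A v := by
  classical
  let payoff : (J → ℝ) → (I → ℝ) → ℝ := fun y x => ∑ i, ∑ j, x i * y j * A i j
  have payoff_left (x : I → ℝ) : IsLinearMap ℝ fun y => payoff y x :=
    ⟨fun y z => by simp only [payoff, Pi.add_apply, mul_add, add_mul, Finset.sum_add_distrib],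
      fun c y => by
        simp only [payoff, Pi.smul_apply, smul_eq_mul, Finset.mul_sum, mul_left_comm, mul_assoc]⟩
  have payoff_right (y : J → ℝ) : IsLinearMap ℝ (payoff y) :=
    ⟨fun x z => by simp only [payoff, Pi.add_apply, add_mul, Finset.sum_add_distrib],
      fun c x => by simp only [payoff, Pi.smul_apply, smul_eq_mul, Finset.mul_sum, mul_assoc]⟩
  have continuous_left (x : I → ℝ) : Continuous fun y => payoff y x := by fun_prop
  have continuous_right (y : J → ℝ) : Continuous (payoff y) := by fun_prop
  obtain ⟨y, hy, x, hx, saddle⟩ := Sion.exists_isSaddlePointOn (f := payoff)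
    ⟨_, single_mem_stdSimplex ℝ (Classical.arbitrary J)⟩ (convex_stdSimplex ℝ J)
    (isCompact_stdSimplex ℝ J)
    (fun x _ => (continuous_left x).lowerSemicontinuous.lowerSemicontinuousOn _)
    (fun x _ => (((payoff_left x).mk' _).convexOn (convex_stdSimplex ℝ J)).quasiconvexOn)
    (convex_stdSimplex ℝ I) ⟨_, single_mem_stdSimplex ℝ (Classical.arbitrary I)⟩
    (isCompact_stdSimplex ℝ I)
    (fun y _ => (continuous_right y).upperSemicontinuous.upperSemicontinuousOn _)
    (fun y _ => (((payoff_right y).mk' _).concaveOn (convex_stdSimplex ℝ I)).quasiconcaveOn)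
  refine ⟨payoff y x, ⟨x, hx, fun j => ?_⟩, ⟨y, hy, fun i => ?_⟩⟩
  · simpa [payoff, Pi.single_apply] using saddle (Pi.single j 1) (single_mem_stdSimplex ℝ j) x hx
  · simpa [payoff, Pi.single_apply] using saddle y hy (Pi.single i 1) (single_mem_stdSimplex ℝ i)

namespace IsMatrixValue

variable {A B : I → J → ℝ} {v w c : ℝ}

theorem le_add (hA : IsMatrixValue A v) (hB : IsMatrixValue B w)
    (h : ∀ i j, A i j ≤ B i j + c) : v ≤ w + c := by
  obtain ⟨⟨x, hx, hxA⟩, -⟩ := hA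
  obtain ⟨-, ⟨y, hy, hyB⟩⟩ := hB
  have row (i : I) : ∑ j, y j * A i j ≤ w + c :=
    calc ∑ j, y j * A i j ≤ ∑ j, (y j * B i j + y j * c) :=
          Finset.sum_le_sum fun j _ => by
            rw [← mul_add]; exact mul_le_mul_of_nonneg_left (h i j) (hy.1 j)
      _ = ∑ j, y j * B i j + c := by
          rw [Finset.sum_add_distrib, ← Finset.sum_mul, hy.2, one_mul]
      _ ≤ w + c := by gcongr; exact hyB i
  calc v ≤ ∑ j, y j * ∑ i, x i * A i j := le_sum_mul_of_mem_stdSimplex hy hxA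
    _ = ∑ i, x i * ∑ j, y j * A i j := by
        simp only [Finset.mul_sum, mul_left_comm]; exact Finset.sum_comm
    _ ≤ w + c := sum_mul_le_of_mem_stdSimplex hx row

theorem le_of_forall_le [Nonempty J] (hA : IsMatrixValue A v) (h : ∀ i j, A i j ≤ c) :
    v ≤ c := by
  obtain ⟨⟨x, hx, hxA⟩, -⟩ := hA
  let j := Classical.arbitrary J
  exact (hxA j).trans (sum_mul_le_of_mem_stdSimplex hx fun i => h i j)

theorem const_sub_swap (hA : IsMatrixValue A v) (c : ℝ) :
    IsMatrixValue (fun j i => c - A i j) (c - v) := by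
  obtain ⟨⟨x, hx, hxA⟩, ⟨y, hy, hyA⟩⟩ := hA
  refine ⟨⟨y, hy, fun i => ?_⟩, ⟨x, hx, fun j => ?_⟩⟩
  · rw [sum_mul_const_sub_of_mem_stdSimplex hy]
    exact sub_le_sub_left (hyA i) c
  · rw [sum_mul_const_sub_of_mem_stdSimplex hx]
    exact sub_le_sub_left (hxA j) c

end IsMatrixValue

variable {S : Type*} {q : S → I → J → S} {g : S → I → J → ℝ} {l m : ℝ} {v w : S → ℝ}

/-- `v` is the value function of the `l`-discounted game, expressed by Shapley's equation; the
current payoff has weight `l` and the continuation weight `1 - l`. -/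
def IsDiscountedValue (q : S → I → J → S) (g : S → I → J → ℝ) (l : ℝ) (v : S → ℝ) : Prop :=
  ∀ s, IsMatrixValue (fun i j => l * g s i j + (1 - l) * v (q s i j)) (v s)

theorem exists_isDiscountedValue [Finite S] [Nonempty I] [Nonempty J] (q : S → I → J → S)
    (g : S → I → J → ℝ) (h0 : 0 < l) (h1 : l ≤ 1) : ∃ v, IsDiscountedValue q g l v := by
  have := Fintype.ofFinite S
  choose val isValue using exists_isMatrixValue (I := I) (J := J)
  let shapley : (S → ℝ) → S → ℝ := fun w s => val fun i j => l * g s i j + (1 - l) * w (q s i j)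
  have hl : 0 ≤ 1 - l := sub_nonneg.2 h1
  have shapley_le (w w' : S → ℝ) (s : S) :
      shapley w s ≤ shapley w' s + (1 - l) * dist w w' := by
    refine (isValue _).le_add (isValue _) fun i j => ?_
    have : w (q s i j) ≤ w' (q s i j) + dist w w' :=
      sub_le_iff_le_add'.1 ((Real.sub_le_dist _ _).trans (dist_le_pi_dist w w' _))
    linear_combination mul_le_mul_of_nonneg_left this hl
  have contracting : ContractingWith (1 - l).toNNReal shapley := by
    refine ⟨Real.toNNReal_lt_one.2 (by linarith), LipschitzWith.of_dist_le_mul fun w w' => ?_⟩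
    rw [Real.coe_toNNReal _ hl]
    refine (dist_pi_le_iff (mul_nonneg hl dist_nonneg)).2 fun s => ?_
    rw [Real.dist_eq, abs_sub_le_iff]
    exact ⟨sub_le_iff_le_add'.2 (shapley_le w w' s),
      sub_le_iff_le_add'.2 (dist_comm w w' ▸ shapley_le w' w s)⟩
  have fixed := contracting.fixedPoint_isFixedPt
  refine ⟨ContractingWith.fixedPoint shapley contracting, fun s => ?_⟩
  convert isValue _ using 1
  exact (congrFun fixed s).symm

namespace IsDiscountedValue

theorem const_sub_swap (hv : IsDiscountedValue q g l v) (c : ℝ) :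
    IsDiscountedValue (fun s j i => q s i j) (fun s j i => c - g s i j) l (fun s => c - v s) := by
  intro s
  convert (hv s).const_sub_swap c using 4
  ring

theorem le_of_forall_le [Finite S] [Nonempty J] {b : ℝ} (h0 : 0 < l) (h1 : l ≤ 1)
    (hg : ∀ s i j, g s i j ≤ b) (hv : IsDiscountedValue q g l v) (s : S) : v s ≤ b := by
  have : Nonempty S := ⟨s⟩
  obtain ⟨t, ht⟩ := Finite.exists_max v
  have hvt : v t ≤ l * b + (1 - l) * v t := (hv t).le_of_forall_le fun i j =>
    add_le_add (mul_le_mul_of_nonneg_left (hg t i j) h0.le)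
      (mul_le_mul_of_nonneg_left (ht _) (sub_nonneg.2 h1))
  exact (ht s).trans (le_of_mul_le_mul_left (by linarith) h0)

theorem mem_Icc [Finite S] [Nonempty I] [Nonempty J] {a b : ℝ} (h0 : 0 < l) (h1 : l ≤ 1)
    (hg : ∀ s i j, g s i j ∈ Set.Icc a b) (hv : IsDiscountedValue q g l v) (s : S) :
    v s ∈ Set.Icc a b := by
  refine ⟨?_, hv.le_of_forall_le h0 h1 (fun s i j => (hg s i j).2) s⟩
  have := (hv.const_sub_swap 0).le_of_forall_le (b := -a) h0 h1
    (fun s j i => by linarith [(hg s i j).1]) s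
  linarith

theorem sub_le_div [Finite S] (h0 : 0 < l) (h1 : l ≤ 1) (hg : ∀ s i j, g s i j ∈ Set.Icc (0 : ℝ) 1)
    (hw01 : ∀ s, w s ∈ Set.Icc (0 : ℝ) 1) (hv : IsDiscountedValue q g l v)
    (hw : IsDiscountedValue q g m w) (s : S) : v s - w s ≤ |l - m| / l := by
  have : Nonempty S := ⟨s⟩
  obtain ⟨t, ht⟩ := Finite.exists_max fun s => v s - w s
  refine (ht s).trans ((le_div_iff₀ h0).2 ?_)
  have hvw : v t ≤ w t + (|l - m| + (1 - l) * (v t - w t)) := (hv t).le_add (hw t) fun i j => by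
    have weight : (l - m) * (g t i j - w (q t i j)) ≤ |l - m| :=
      (le_abs_self _).trans ((abs_mul _ _).trans_le (mul_le_of_le_one_right (abs_nonneg _)
        (Real.dist_le_of_mem_Icc_01 (hg t i j) (hw01 _))))
    linear_combination weight + mul_le_mul_of_nonneg_left (ht (q t i j)) (sub_nonneg.2 h1)
  linarith

theorem abs_sub_le_div [Finite S] (h0 : 0 < l) (h1 : l ≤ 1)
    (hg : ∀ s i j, g s i j ∈ Set.Icc (0 : ℝ) 1) (hw01 : ∀ s, w s ∈ Set.Icc (0 : ℝ) 1)
    (hv : IsDiscountedValue q g l v) (hw : IsDiscountedValue q g m w) (s : S) :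
    |v s - w s| ≤ |l - m| / l := by
  refine abs_sub_le_iff.2 ⟨hv.sub_le_div h0 h1 hg hw01 hw s, ?_⟩
  have := (hv.const_sub_swap 1).sub_le_div h0 h1
    (fun s j i => Set.Icc.mem_iff_one_sub_mem.1 (hg s i j))
    (fun s => Set.Icc.mem_iff_one_sub_mem.1 (hw01 s)) (hw.const_sub_swap 1) s
  rwa [sub_sub_sub_cancel_left] at this

end IsDiscountedValue

end MatrixGame

/-! ### Bounded alternation -/

section BoundedAlternation

variable {ι R : Type*}

/-- Families of functions of `n` which are polynomials in `μ n` of uniformly bounded degree. -/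
def boundedDegreeFamilies (ι : Type*) [CommRing R] (μ : ℕ → R) : Subring (ι → ℕ → R) where
  carrier := {f | ∃ d : ℕ, ∀ c, ∃ P : Polynomial R, P.natDegree ≤ d ∧ ∀ n, f c n = P.eval (μ n)}
  zero_mem' := ⟨0, fun _ => ⟨0, by simp⟩⟩
  one_mem' := ⟨0, fun _ => ⟨1, by simp⟩⟩
  add_mem' := by
    rintro f g ⟨d, hf⟩ ⟨e, hg⟩
    refine ⟨max d e, fun c => ?_⟩
    obtain ⟨P, hP, hfP⟩ := hf c
    obtain ⟨Q, hQ, hgQ⟩ := hg c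
    exact ⟨P + Q, (Polynomial.natDegree_add_le _ _).trans (max_le_max hP hQ),
      fun n => by simp [hfP, hgQ]⟩
  mul_mem' := by
    rintro f g ⟨d, hf⟩ ⟨e, hg⟩
    refine ⟨d + e, fun c => ?_⟩
    obtain ⟨P, hP, hfP⟩ := hf c
    obtain ⟨Q, hQ, hgQ⟩ := hg c
    exact ⟨P * Q, Polynomial.natDegree_mul_le.trans (add_le_add hP hQ),
      fun n => by simp [hfP, hgQ]⟩
  neg_mem' := by
    rintro f ⟨d, hf⟩
    refine ⟨d, fun c => ?_⟩
    obtain ⟨P, hP, hfP⟩ := hf c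
    exact ⟨-P, by simpa using hP, fun n => by simp [hfP]⟩

namespace boundedDegreeFamilies

variable [CommRing R]

theorem const_mem (μ : ℕ → R) (a : ι → R) : (fun c _ => a c) ∈ boundedDegreeFamilies ι μ :=
  ⟨0, fun c => ⟨Polynomial.C (a c), by simp⟩⟩

theorem apply_mem (μ : ℕ → R) : (fun _ n => μ n) ∈ boundedDegreeFamilies ι μ :=
  ⟨1, fun _ => ⟨Polynomial.X, Polynomial.natDegree_X_le, by simp⟩⟩

theorem det_mem {S : Type*} [Fintype S] [DecidableEq S] {μ : ℕ → R}
    {M : ι → ℕ → Matrix S S R} (hM : ∀ s t, (fun c n => M c n s t) ∈ boundedDegreeFamilies ι μ) :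
    (fun c n => (M c n).det) ∈ boundedDegreeFamilies ι μ := by
  have : (fun c n => (M c n).det) =
      ∑ σ : Equiv.Perm S, Equiv.Perm.sign σ • ∏ s, fun c n => M c n (σ s) s := by
    ext c n
    simp [Matrix.det_apply]
  rw [this]
  exact sum_mem fun σ _ => zsmul_mem (prod_mem fun s _ => hM _ _) (Equiv.Perm.sign σ)

end boundedDegreeFamilies

/-- The predicates on `ℕ` in the family `A` change truth value a bounded number of times, uniformly
over the family. -/
def HasBoundedAlternation (A : ι → ℕ → Prop) : Prop :=
  ∃ K : ℕ, ∀ c, {n | ¬ (A c n ↔ A c (n + 1))}.encard ≤ K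

theorem encard_le_natDegree_of_pairwise_disjoint [CommRing R] [IsDomain R] {P : Polynomial R}
    (hP : P ≠ 0) {A : ι → Set R} (hA : Pairwise (Function.onFun Disjoint A)) :
    {n | ∃ r ∈ A n, P.IsRoot r}.encard ≤ P.natDegree := by
  classical
  choose! root mem_root isRoot using
    fun (n : ι) (hn : n ∈ {n | ∃ r ∈ A n, P.IsRoot r}) => hn
  have injOn : Set.InjOn root {n | ∃ r ∈ A n, P.IsRoot r} := fun n hn m hm h => by
    by_contra hnm
    exact Set.disjoint_left.1 (hA hnm) (mem_root n hn) (h ▸ mem_root m hm)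
  calc _ ≤ (P.roots.toFinset : Set R).encard :=
        Set.encard_le_encard_of_injOn (fun n hn => by simpa [hP] using isRoot n hn) injOn
    _ = P.roots.toFinset.card := Set.encard_coe_eq_coe_finsetCard _
    _ ≤ P.natDegree := mod_cast (Multiset.toFinset_card_le _).trans P.card_roots'

namespace HasBoundedAlternation

variable {A B : ι → ℕ → Prop}

theorem not (hA : HasBoundedAlternation A) : HasBoundedAlternation fun c n => ¬ A c n := by
  simpa only [HasBoundedAlternation, not_iff_not] using hA

theorem and (hA : HasBoundedAlternation A) (hB : HasBoundedAlternation B) :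
    HasBoundedAlternation fun c n => A c n ∧ B c n := by
  obtain ⟨K, hK⟩ := hA
  obtain ⟨L, hL⟩ := hB
  refine ⟨K + L, fun c => ?_⟩
  push_cast
  refine (Set.encard_le_encard ?_).trans
    ((Set.encard_union_le _ _).trans (add_le_add (hK c) (hL c)))
  intro n
  simp only [Set.mem_ofPred_eq, Set.mem_union]
  tauto

theorem forall_finite {R : Type*} [Finite R] {A : R → ι → ℕ → Prop}
    (hA : ∀ r, HasBoundedAlternation (A r)) :
    HasBoundedAlternation fun c n => ∀ r, A r c n := by
  classical
  cases nonempty_fintype R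
  suffices ∀ s : Finset R, HasBoundedAlternation fun c n => ∀ r ∈ s, A r c n by
    simpa using this Finset.univ
  intro s
  induction s using Finset.induction_on with
  | empty => exact ⟨0, by simp⟩
  | insert a s _ ih => simpa only [Finset.forall_mem_insert] using (hA a).and ih

theorem pos {μ : ℕ → ℝ} (hμ : Antitone μ) {f : ι → ℕ → ℝ} (hf : f ∈ boundedDegreeFamilies ι μ) :
    HasBoundedAlternation fun c n => 0 < f c n := by
  obtain ⟨d, hd⟩ := hf
  refine ⟨d + d, fun c => ?_⟩
  obtain ⟨P, hPd, hP⟩ := hd c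
  rcases eq_or_ne P 0 with rfl | h0
  · simp [hP]
  have hsub : {n | ¬ (0 < f c n ↔ 0 < f c (n + 1))} ⊆
      {n | ∃ r ∈ Set.Ico (μ (n + 1)) (μ n), P.IsRoot r} ∪
        {n | ∃ r ∈ Set.Ioc (μ (n + 1)) (μ n), P.IsRoot r} := by
    intro n hn
    have hle : μ (n + 1) ≤ μ n := hμ n.le_succ
    simp only [Set.mem_ofPred_eq, hP, not_iff, not_lt] at hn
    rcases lt_or_ge 0 (P.eval (μ n)) with hpos | hneg
    · exact Or.inl (intermediate_value_Ico hle P.continuousOn ⟨by grind, hpos⟩)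
    · exact Or.inr (intermediate_value_Ioc' hle P.continuousOn ⟨hneg, by grind⟩)
  push_cast
  have hroots : (P.natDegree : ℕ∞) ≤ d := mod_cast hPd
  exact (Set.encard_le_encard hsub).trans ((Set.encard_union_le _ _).trans (add_le_add
    ((encard_le_natDegree_of_pairwise_disjoint h0 hμ.pairwise_disjoint_on_Ico_succ).trans hroots)
    ((encard_le_natDegree_of_pairwise_disjoint h0 hμ.pairwise_disjoint_on_Ioc_succ).trans hroots)))

end HasBoundedAlternation

/-- Fourier–Motzkin elimination of the variable `t` from the inequalities selected by `G`. -/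
theorem exists_forall_mul_add_pos_iff {𝕜 R : Type*} [Field 𝕜] [LinearOrder 𝕜]
    [IsStrictOrderedRing 𝕜] [Finite R] (G : R → Prop) (a b : R → 𝕜) :
    (∃ t : 𝕜, ∀ r, G r → 0 < a r * t + b r) ↔
      (∀ r, G r ∧ ¬ 0 < a r ∧ ¬ 0 < -a r → 0 < b r) ∧
        ∀ p : R × R, G p.1 ∧ G p.2 ∧ 0 < a p.1 ∧ 0 < -a p.2 →
          0 < a p.1 * b p.2 + -a p.2 * b p.1 := by
  constructor
  · rintro ⟨t, ht⟩
    refine ⟨fun r ⟨hr, hpos, hneg⟩ => ?_, fun ⟨r, r'⟩ ⟨hr, hr', hpos, hneg⟩ => ?_⟩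
    · have h0 : a r = 0 := le_antisymm (not_lt.1 hpos) (by simpa using hneg)
      simpa [h0] using ht r hr
    · linear_combination mul_pos hneg (ht r hr) + mul_pos hpos (ht r' hr')
  · rintro ⟨hzero, hpair⟩
    obtain ⟨t, hlower, hupper⟩ := Set.Finite.exists_between'
      (s := (fun r => -b r / a r) '' {r | G r ∧ 0 < a r})
      (t := (fun r => b r / -a r) '' {r | G r ∧ 0 < -a r}) (Set.toFinite _) (Set.toFinite _) (by
        rintro _ ⟨r, ⟨hr, hr'⟩, rfl⟩ _ ⟨p, ⟨hp, hp'⟩, rfl⟩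
        rw [div_lt_div_iff₀ hr' hp']
        linear_combination hpair (r, p) ⟨hr, hp, hr', hp'⟩)
    refine ⟨t, fun r hr => ?_⟩
    rcases lt_trichotomy (a r) 0 with h | h | h
    · have := hupper _ ⟨r, ⟨hr, neg_pos.2 h⟩, rfl⟩
      rw [lt_div_iff₀ (neg_pos.2 h)] at this
      linarith
    · simpa [h] using hzero r ⟨hr, by simp [h], by simp [h]⟩
    · have := hlower _ ⟨r, ⟨hr, h⟩, rfl⟩
      rw [div_lt_iff₀ h] at this
      linarith

theorem exists_fin_succ_forall_sum_pos_iff {𝕜 R : Type*} [Semiring 𝕜] [LT 𝕜]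
    {k : ℕ} (G : R → Prop) (a : R → Fin (k + 1) → 𝕜) :
    (∃ x : Fin (k + 1) → 𝕜, ∀ r, G r → 0 < ∑ i, a r i * x i) ↔
      ∃ (y : Fin k → 𝕜) (t : 𝕜), ∀ r, G r → 0 < a r 0 * t + ∑ i, a r i.succ * y i := by
  simp only [Fin.sum_univ_succ]
  exact ⟨fun ⟨x, hx⟩ => ⟨Fin.tail x, x 0, hx⟩, fun ⟨y, t, h⟩ => ⟨Fin.cons t y, by simpa using h⟩⟩

theorem HasBoundedAlternation.exists_forall_sum_pos.{u} {μ : ℕ → ℝ} (hμ : Antitone μ) (k : ℕ) :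
    ∀ {R : Type u} [Finite R] (G : R → ι → ℕ → Prop) (_ : ∀ r, HasBoundedAlternation (G r))
      (a : R → Fin k → ι → ℕ → ℝ) (_ : ∀ r i, a r i ∈ boundedDegreeFamilies ι μ),
      HasBoundedAlternation fun c n =>
        ∃ x : Fin k → ℝ, ∀ r, G r c n → 0 < ∑ i, a r i c n * x i := by
  induction k with
  | zero =>
    intro R _ G hG a _
    simpa using HasBoundedAlternation.forall_finite fun r => (hG r).not
  | succ k ih =>
    intro R _ G hG a ha
    have hpos (r : R) := HasBoundedAlternation.pos hμ (ha r 0)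
    have hneg (r : R) := HasBoundedAlternation.pos hμ (neg_mem (ha r 0))
    convert ih (R := R ⊕ R × R)
      (Sum.elim (fun r c n => G r c n ∧ ¬ 0 < a r 0 c n ∧ ¬ 0 < -a r 0 c n)
        fun p c n => G p.1 c n ∧ G p.2 c n ∧ 0 < a p.1 0 c n ∧ 0 < -a p.2 0 c n)
      (Sum.rec (fun r => (hG r).and ((hpos r).not.and (hneg r).not))
        fun p => (hG _).and ((hG _).and ((hpos _).and (hneg _))))
      (Sum.elim (fun r i => a r i.succ) fun p i => a p.1 0 * a p.2 i.succ + -a p.2 0 * a p.1 i.succ)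
      (Sum.rec (fun r i => ha r _)
        fun p i => add_mem (mul_mem (ha _ _) (ha _ _)) (mul_mem (neg_mem (ha _ _)) (ha _ _)))
      using 3 with c n
    rw [exists_fin_succ_forall_sum_pos_iff]
    refine exists_congr fun y => ?_
    rw [exists_forall_mul_add_pos_iff]
    simp only [Sum.forall, Sum.elim_inl, Sum.elim_inr, Pi.add_apply, Pi.mul_apply, Pi.neg_apply,
      add_mul, Finset.sum_add_distrib, Finset.mul_sum, mul_assoc]

theorem HasBoundedAlternation.exists_pos_forall_sum_pos {μ : ℕ → ℝ} (hμ : Antitone μ)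
    {A B : Type*} [Fintype A] [Finite B] (W : A → B → ι → ℕ → ℝ)
    (hW : ∀ a b, W a b ∈ boundedDegreeFamilies ι μ) :
    HasBoundedAlternation fun c n =>
      ∃ z : A → ℝ, (∀ a, 0 < z a) ∧ ∀ b, 0 < ∑ a, z a * W a b c n := by
  let e := Fintype.equivFin A
  convert HasBoundedAlternation.exists_forall_sum_pos hμ (Fintype.card A) (R := Fin _ ⊕ B)
    (fun _ _ _ => True) (fun _ => ⟨0, by simp⟩)
    (Sum.elim (fun r i => if r = i then 1 else 0) fun b i => W (e.symm i) b)
    (Sum.rec (fun r i => by dsimp only [Sum.elim_inl]; split_ifs <;> simp [one_mem, zero_mem])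
      fun b i => hW _ b) using 3 with c n
  have unit_row (x : Fin (Fintype.card A) → ℝ) (r : Fin (Fintype.card A)) :
      ∑ i, (if r = i then (1 : ι → ℕ → ℝ) else 0) c n * x i = x r := by
    rw [Finset.sum_eq_single r (fun i _ hi => by simp [hi.symm]) (by simp)]
    simp
  rw [(e.arrowCongr (Equiv.refl ℝ)).exists_congr_left]
  simp only [Sum.forall, Sum.elim_inl, Sum.elim_inr, unit_row, true_imp_iff]
  refine exists_congr fun x => and_congr ?_ (forall_congr' fun b => ?_)
  · exact e.forall_congr_left.trans (by simp)
  · rw [← e.sum_comp]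
    simp [mul_comm]

end BoundedAlternation

section Variation

open MeasureTheory

theorem sum_measure_le_mul_measure {α ι : Type*} [MeasurableSpace α] (μ : Measure α)
    {s : Finset ι} {A : ι → Set α} {B : Set α} {K : ℕ} (hA : ∀ n ∈ s, MeasurableSet (A n))
    (hAB : ∀ n ∈ s, A n ⊆ B) (hK : ∀ x, {n | n ∈ s ∧ x ∈ A n}.encard ≤ K) :
    ∑ n ∈ s, μ (A n) ≤ K * μ B := by
  classical
  have count (x : α) : ∑ n ∈ s, (A n).indicator (1 : α → ENNReal) x ≤ K := by
    have := hK x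
    rw [← Finset.coe_filter, Set.encard_coe_eq_coe_finsetCard] at this
    simp only [Set.indicator_apply, Pi.one_apply, Finset.sum_boole]
    exact_mod_cast this
  calc ∑ n ∈ s, μ (A n)
      = ∑ n ∈ s, ∫⁻ x in B, (A n).indicator 1 x ∂μ := Finset.sum_congr rfl fun n hn => by
        rw [lintegral_indicator_one (hA n hn), Measure.restrict_eq_self μ (hAB n hn)]
    _ = ∫⁻ x in B, ∑ n ∈ s, (A n).indicator 1 x ∂μ :=
        (lintegral_finsetSum' _ fun n hn => (measurable_one.indicator (hA n hn)).aemeasurable).symm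
    _ ≤ ∫⁻ _ in B, K ∂μ := lintegral_mono count
    _ = K * μ B := setLIntegral_const B _

theorem sum_abs_sub_succ_le {f : ℕ → ℝ} {a b : ℝ} (hf : ∀ n, f n ∈ Set.Icc a b) {K : ℕ}
    (hK : ∀ c, {n | ¬ (c < f n ↔ c < f (n + 1))}.encard ≤ K) (s : Finset ℕ) :
    ∑ n ∈ s, |f n - f (n + 1)| ≤ K * (b - a) := by
  have hab : a ≤ b := (hf 0).1.trans (hf 0).2
  have key := sum_measure_le_mul_measure volume (s := s) (B := Set.Icc a b) (K := K)
    (A := fun n => Set.Ico (min (f n) (f (n + 1))) (max (f n) (f (n + 1))))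
    (fun _ _ => measurableSet_Ico)
    (fun n _ => Set.Ico_subset_Icc_self.trans
      (Set.Icc_subset_Icc (le_min (hf _).1 (hf _).1) (max_le (hf _).2 (hf _).2)))
    (fun c => (Set.encard_le_encard fun n hn => ?_).trans (hK c))
  · simp only [Real.volume_Ico, max_sub_min_eq_abs', Real.volume_Icc] at key
    rw [← ENNReal.ofReal_sum_of_nonneg fun _ _ => abs_nonneg _, ← ENNReal.ofReal_natCast,
      ← ENNReal.ofReal_mul K.cast_nonneg] at key
    exact (ENNReal.ofReal_le_ofReal_iff (mul_nonneg K.cast_nonneg (sub_nonneg.2 hab))).1 key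
  · simp only [Set.mem_ofPred_eq, Set.mem_Ico, min_le_iff, lt_max_iff] at hn ⊢
    grind

theorem HasBoundedAlternation.exists_sum_abs_sub_succ_le {f : ℕ → ℝ} {a b : ℝ}
    (hf : ∀ n, f n ∈ Set.Icc a b) (h : HasBoundedAlternation fun c n => c < f n) :
    ∃ K, ∀ s : Finset ℕ, ∑ n ∈ s, |f n - f (n + 1)| ≤ K :=
  let ⟨_, hK⟩ := h
  ⟨_, sum_abs_sub_succ_le hf hK⟩

end Variation

/-! ### Level sets of discounted values -/

section Cramer

variable {S : Type*} [Fintype S] [DecidableEq S] {Q : Matrix S S ℝ} {t : ℝ}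

theorem nonneg_of_one_sub_smul_mulVec_nonneg (hQ : Q ∈ Matrix.rowStochastic ℝ S) (h0 : 0 ≤ t)
    (h1 : t < 1) {u : S → ℝ} (hu : 0 ≤ (1 - t • Q).mulVec u) : 0 ≤ u := by
  intro s
  have : Nonempty S := ⟨s⟩
  obtain ⟨m, hm⟩ := Finite.exists_min u
  have average : u m ≤ Q.mulVec u m := le_sum_mul_of_mem_stdSimplex
    ⟨fun _ => Matrix.nonneg_of_mem_rowStochastic hQ, Matrix.sum_row_of_mem_rowStochastic hQ m⟩ hm
  have hum : t * Q.mulVec u m ≤ u m := by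
    simpa [Matrix.sub_mulVec, Matrix.smul_mulVec] using hu m
  have : 0 ≤ (1 - t) * u m := by linear_combination hum + mul_le_mul_of_nonneg_left average h0
  exact (nonneg_of_mul_nonneg_right this (sub_pos.2 h1)).trans (hm s)

theorem det_one_sub_smul_ne_zero (hQ : Q ∈ Matrix.rowStochastic ℝ S) (h0 : 0 ≤ t) (h1 : t < 1) :
    (1 - t • Q).det ≠ 0 := by
  intro hdet
  obtain ⟨u, hu0, hu⟩ := Matrix.exists_mulVec_eq_zero_iff.2 hdet
  have hneg : 0 ≤ -u :=
    nonneg_of_one_sub_smul_mulVec_nonneg hQ h0 h1 (by rw [Matrix.mulVec_neg, hu, neg_zero])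
  exact hu0 (le_antisymm (neg_nonneg.1 hneg)
    (nonneg_of_one_sub_smul_mulVec_nonneg hQ h0 h1 hu.ge))

theorem det_one_sub_smul_pos (hQ : Q ∈ Matrix.rowStochastic ℝ S) (h0 : 0 ≤ t) (h1 : t < 1) :
    0 < (1 - t • Q).det := by
  by_contra! hneg
  have hcont : Continuous fun t : ℝ => (1 - t • Q).det := by fun_prop
  obtain ⟨r, hr, hr0⟩ := intermediate_value_Icc' h0 hcont.continuousOn
    (show (0 : ℝ) ∈ _ from ⟨hneg, by simp⟩)
  exact det_one_sub_smul_ne_zero hQ hr.1 (hr.2.trans_lt h1) hr0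

theorem det_mul_le_cramer (hQ : Q ∈ Matrix.rowStochastic ℝ S) (h0 : 0 ≤ t) (h1 : t < 1)
    {u r : S → ℝ} (hu : (1 - t • Q).mulVec u ≤ r) (s : S) :
    (1 - t • Q).det * u s ≤ (1 - t • Q).cramer r s := by
  have : 0 ≤ (1 - t • Q).cramer r - (1 - t • Q).det • u := by
    refine nonneg_of_one_sub_smul_mulVec_nonneg hQ h0 h1 ?_
    rw [Matrix.mulVec_sub, Matrix.mulVec_cramer, Matrix.mulVec_smul, ← smul_sub]
    exact smul_nonneg (det_one_sub_smul_pos hQ h0 h1).le (sub_nonneg.2 hu)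
  simpa using this s

theorem cramer_le_det_mul (hQ : Q ∈ Matrix.rowStochastic ℝ S) (h0 : 0 ≤ t) (h1 : t < 1)
    {u r : S → ℝ} (hu : r ≤ (1 - t • Q).mulVec u) (s : S) :
    (1 - t • Q).cramer r s ≤ (1 - t • Q).det * u s := by
  have := det_mul_le_cramer hQ h0 h1 (u := -u) (r := -r)
    (by rw [Matrix.mulVec_neg]; exact neg_le_neg hu) s
  simpa using this

end Cramer

theorem det_of_sum_smul {S A R : Type*} [Fintype S] [DecidableEq S] [Fintype A] [CommRing R]
    (p : S → A → R) (row : S → A → S → R) :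
    (Matrix.of fun s => ∑ a, p s a • row s a).det =
      ∑ α : S → A, (∏ s, p s (α s)) * (Matrix.of fun s => row s (α s)).det := by
  have expand := (Matrix.detRowAlternating (R := R) (n := S)).toMultilinearMap.map_sum
    fun s a => p s a • row s a
  simp only [MultilinearMap.map_smul_univ, smul_eq_mul] at expand
  exact expand

theorem prod_mem_stdSimplex {S A : Type*} [Fintype S] [DecidableEq S] [Fintype A] {p : S → A → ℝ}
    (hp : ∀ s, p s ∈ stdSimplex ℝ A) :
    (fun α : S → A => ∏ s, p s (α s)) ∈ stdSimplex ℝ (S → A) := by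
  refine ⟨fun α => Finset.prod_nonneg fun s _ => (hp s).1 _, ?_⟩
  rw [← Fintype.prod_sum]
  exact Finset.prod_eq_one fun s _ => (hp s).2

section LevelMatrix

variable {S A : Type*} [DecidableEq S]

/-- The transition matrix on the states `S` when the action `a`, chosen at `s` with weight `p s a`,
leads to the state `t s a`. -/
def transitionMatrix [Fintype A] (p : S → A → ℝ) (t : S → A → S) : Matrix S S ℝ :=
  Matrix.of fun s => ∑ a, p s a • Pi.single (t s a) 1

/-- For the deterministic stationary transition `t` with payoff `x`, the matrix
`1 - (1 - l) • Q` with its column `s₀` replaced by `l • x - c • column`. By Cramer's rule, its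
determinant has the sign of the difference between the discounted payoff from `s₀` and the level
`c`. -/
def levelMatrix (l c : ℝ) (s₀ : S) (t : S → S) (x : S → ℝ) : Matrix S S ℝ :=
  Matrix.of fun s =>
    let row : S → ℝ := Pi.single s 1 - (1 - l) • Pi.single (t s) 1
    Function.update row s₀ (l * x s - c * row s₀)

theorem levelMatrix_mem_boundedDegreeFamilies (μ : ℕ → ℝ) (s₀ : S) (t : S → S) (x : S → ℝ)
    (s s' : S) :
    (fun c n => levelMatrix (μ n) c s₀ t x s s') ∈ boundedDegreeFamilies ℝ μ := by
  have const_mem := boundedDegreeFamilies.const_mem (ι := ℝ) μ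
  have μ_mem := boundedDegreeFamilies.apply_mem (ι := ℝ) μ
  have row_mem (r : S) : (fun _ n => (Pi.single s 1 : S → ℝ) r -
      (1 - μ n) * (Pi.single (t s) 1 : S → ℝ) r) ∈ boundedDegreeFamilies ℝ μ :=
    sub_mem (const_mem _) (mul_mem (sub_mem (const_mem _) μ_mem) (const_mem _))
  rcases eq_or_ne s' s₀ with rfl | h
  · simp only [levelMatrix, Matrix.of_apply, Function.update_self]
    exact sub_mem (mul_mem μ_mem (const_mem _)) (mul_mem (const_mem id) (row_mem _))
  · simp only [levelMatrix, Matrix.of_apply, Function.update_of_ne h]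
    exact row_mem _

variable [Fintype S] [Fintype A] {p : S → A → ℝ} {l c : ℝ} {v : S → ℝ}

theorem transitionMatrix_mem_rowStochastic (hp : ∀ s, p s ∈ stdSimplex ℝ A) (t : S → A → S) :
    transitionMatrix p t ∈ Matrix.rowStochastic ℝ S := by
  refine Matrix.mem_rowStochastic_iff_sum.2 ⟨fun s s' => ?_, fun s => ?_⟩
  · simp only [transitionMatrix, Matrix.of_apply, Finset.sum_apply, Pi.smul_apply, smul_eq_mul]
    have single_nonneg (r : S) : (0 : S → ℝ) ≤ Pi.single r 1 := Pi.single_nonneg.2 zero_le_one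
    exact Finset.sum_nonneg fun a _ => mul_nonneg ((hp s).1 a) (single_nonneg _ s')
  · simp only [transitionMatrix, Matrix.of_apply, Finset.sum_apply, Pi.smul_apply, smul_eq_mul]
    rw [Finset.sum_comm]
    simp [← Finset.mul_sum, (hp s).2]

theorem one_sub_smul_transitionMatrix_mulVec (p : S → A → ℝ) (t : S → A → S) (l : ℝ) (v : S → ℝ)
    (s : S) : (1 - (1 - l) • transitionMatrix p t).mulVec v s =
      v s - ∑ a, p s a * ((1 - l) * v (t s a)) := by
  have : (transitionMatrix p t).mulVec v s = ∑ a, p s a * v (t s a) := by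
    change (∑ a, p s a • (Pi.single (t s a) 1 : S → ℝ)) ⬝ᵥ v = _
    simp [sum_dotProduct, smul_dotProduct]
  simp [Matrix.sub_mulVec, Matrix.smul_mulVec, this, Finset.mul_sum, mul_left_comm]

theorem sum_prod_mul_det_levelMatrix (hp : ∀ s, p s ∈ stdSimplex ℝ A) (t : S → A → S)
    (x : S → A → ℝ) (l c : ℝ) (s₀ : S) :
    ∑ α : S → A, (∏ s, p s (α s)) *
        (levelMatrix l c s₀ (fun s => t s (α s)) fun s => x s (α s)).det =
      (1 - (1 - l) • transitionMatrix p t).cramer (fun s => ∑ a, p s a * (l * x s a)) s₀ -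
        c * (1 - (1 - l) • transitionMatrix p t).det := by
  set M := 1 - (1 - l) • transitionMatrix p t with hM
  set r : S → ℝ := fun s => ∑ a, p s a * (l * x s a) with hr
  let row (s : S) (a : A) : S → ℝ := Pi.single s 1 - (1 - l) • Pi.single (t s a) 1
  have M_apply (s s' : S) : M s s' = ∑ a, p s a * row s a s' := by
    have hsum := sum_mul_const_sub_of_mem_stdSimplex (hp s)
    simp [hM, row, transitionMatrix, hsum, Matrix.one_apply, Pi.single_apply, Finset.mul_sum,
      mul_comm, eq_comm]
  have average : (Matrix.of fun s => ∑ a, p s a •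
      Function.update (row s a) s₀ (l * x s a - c * row s a s₀)) =
      M.updateCol s₀ (r - c • M.col s₀) := by
    ext s s'
    rcases eq_or_ne s' s₀ with rfl | h
    · simp [hr, M_apply, mul_sub, Finset.mul_sum, mul_left_comm]
    · simp [h, M_apply]
  calc _ = (M.updateCol s₀ (r - c • M.col s₀)).det :=
        (det_of_sum_smul _ _).symm.trans (congrArg Matrix.det average)
    _ = M.cramer r s₀ - c * M.cramer (M.col s₀) s₀ := by
        rw [← Matrix.cramer_apply, map_sub, map_smul]; rfl
    _ = M.cramer r s₀ - c * M.det := by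
        rw [Matrix.cramer_apply M (M.col s₀)]
        congr 3
        exact Matrix.updateCol_eq_self M s₀

theorem sum_prod_mul_det_levelMatrix_pos (hp : ∀ s, p s ∈ stdSimplex ℝ A) {t : S → A → S}
    {x : S → A → ℝ} (h0 : 0 < l) (h1 : l ≤ 1)
    (hv : ∀ s, v s ≤ ∑ a, p s a * (l * x s a + (1 - l) * v (t s a))) {s₀ : S} (hc : c < v s₀) :
    0 < ∑ α : S → A, (∏ s, p s (α s)) *
      (levelMatrix l c s₀ (fun s => t s (α s)) fun s => x s (α s)).det := by
  have hQ := transitionMatrix_mem_rowStochastic hp t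
  have hdet := det_one_sub_smul_pos hQ (sub_nonneg.2 h1) (sub_lt_self 1 h0)
  have hcramer := det_mul_le_cramer hQ (sub_nonneg.2 h1) (sub_lt_self 1 h0) (u := v)
    (r := fun s => ∑ a, p s a * (l * x s a)) (fun s => by
      have := hv s
      simp only [mul_add, Finset.sum_add_distrib] at this
      rw [one_sub_smul_transitionMatrix_mulVec]
      linarith) s₀
  rw [sum_prod_mul_det_levelMatrix hp]
  linarith [mul_lt_mul_of_pos_right hc hdet]

theorem sum_prod_mul_det_levelMatrix_nonpos (hp : ∀ s, p s ∈ stdSimplex ℝ A) {t : S → A → S}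
    {x : S → A → ℝ} (h0 : 0 < l) (h1 : l ≤ 1)
    (hv : ∀ s, ∑ a, p s a * (l * x s a + (1 - l) * v (t s a)) ≤ v s) {s₀ : S} (hc : v s₀ ≤ c) :
    ∑ α : S → A, (∏ s, p s (α s)) *
      (levelMatrix l c s₀ (fun s => t s (α s)) fun s => x s (α s)).det ≤ 0 := by
  have hQ := transitionMatrix_mem_rowStochastic hp t
  have hdet := det_one_sub_smul_pos hQ (sub_nonneg.2 h1) (sub_lt_self 1 h0)
  have hcramer := cramer_le_det_mul hQ (sub_nonneg.2 h1) (sub_lt_self 1 h0) (u := v)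
    (r := fun s => ∑ a, p s a * (l * x s a)) (fun s => by
      have := hv s
      simp only [mul_add, Finset.sum_add_distrib] at this
      rw [one_sub_smul_transitionMatrix_mulVec]
      linarith) s₀
  rw [sum_prod_mul_det_levelMatrix hp]
  linarith [mul_le_mul_of_nonneg_right hc hdet.le]

end LevelMatrix

section LinearSystem

variable {A B : Type*} [Fintype A] {W : A → B → ℝ}

theorem exists_pos_forall_sum_mul_pos [Finite B] {x : A → ℝ} (hx : ∀ a, 0 ≤ x a)
    (hW : ∀ b, 0 < ∑ a, x a * W a b) :
    ∃ z : A → ℝ, (∀ a, 0 < z a) ∧ ∀ b, 0 < ∑ a, z a * W a b := by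
  have eventually_pos : ∀ᶠ δ in 𝓝[>] (0 : ℝ), ∀ b, 0 < ∑ a, (x a + δ) * W a b := by
    refine eventually_all.2 fun b => eventually_nhdsWithin_of_eventually_nhds ?_
    have hcont : Continuous fun δ : ℝ => ∑ a, (x a + δ) * W a b := by fun_prop
    exact (hcont.tendsto 0).eventually (lt_mem_nhds (by simpa using hW b))
  obtain ⟨δ, hδ, hδ0⟩ := (eventually_pos.and self_mem_nhdsWithin).exists
  exact ⟨fun a => x a + δ, fun a => add_pos_of_nonneg_of_pos (hx a) hδ0, hδ⟩

theorem exists_sum_mul_nonpos [Fintype B] {y : B → ℝ} (hy : y ∈ stdSimplex ℝ B)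
    (hW : ∀ a, ∑ b, y b * W a b ≤ 0) {z : A → ℝ} (hz : ∀ a, 0 ≤ z a) :
    ∃ b, ∑ a, z a * W a b ≤ 0 := by
  by_contra! hpos
  have : Nonempty B := by
    by_contra h
    rw [not_nonempty_iff] at h
    simpa using hy.2
  obtain ⟨b, hb⟩ := Finite.exists_min fun b => ∑ a, z a * W a b
  refine (hpos b).not_ge ?_
  calc ∑ a, z a * W a b ≤ ∑ b, y b * ∑ a, z a * W a b := le_sum_mul_of_mem_stdSimplex hy hb
    _ = ∑ a, z a * ∑ b, y b * W a b := by
        simp only [Finset.mul_sum, mul_left_comm]; exact Finset.sum_comm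
    _ ≤ 0 := Finset.sum_nonpos fun a _ => mul_nonpos_of_nonneg_of_nonpos (hz a) (hW a)

end LinearSystem

section LevelSets

variable {S I J : Type*} [Fintype I] [Fintype J] {q : S → I → J → S} {g : S → I → J → ℝ}

/-- The criterion of Attia and Oliu-Barton: the level sets of a discounted value are given by
the solvability of a linear system indexed by pure stationary strategies. -/
theorem IsDiscountedValue.lt_apply_iff [Fintype S] [DecidableEq S] {l : ℝ} {v : S → ℝ}
    (hv : IsDiscountedValue q g l v) (h0 : 0 < l) (h1 : l ≤ 1) (s₀ : S) (c : ℝ) :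
    c < v s₀ ↔ ∃ z : (S → I) → ℝ, (∀ a, 0 < z a) ∧ ∀ b : S → J, 0 < ∑ a, z a *
      (levelMatrix l c s₀ (fun s => q s (a s) (b s)) fun s => g s (a s) (b s)).det := by
  choose x hx hxv using fun s => (hv s).1
  choose y hy hyv using fun s => (hv s).2
  let W (a : S → I) (b : S → J) : ℝ :=
    (levelMatrix l c s₀ (fun s => q s (a s) (b s)) fun s => g s (a s) (b s)).det
  refine ⟨fun hc => ?_, fun ⟨z, hz, hpos⟩ => ?_⟩
  · exact exists_pos_forall_sum_mul_pos (W := W) (prod_mem_stdSimplex hx).1 fun b =>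
      sum_prod_mul_det_levelMatrix_pos hx h0 h1 (fun s => hxv s (b s)) hc
  · by_contra! hc
    have hneg (a : S → I) : ∑ b : S → J, (∏ s, y s (b s)) * W a b ≤ 0 :=
      sum_prod_mul_det_levelMatrix_nonpos hy h0 h1 (fun s => hyv s (a s)) hc
    obtain ⟨b, hb⟩ := exists_sum_mul_nonpos (prod_mem_stdSimplex hy) hneg fun a => (hz a).le
    exact (hpos b).not_ge hb

theorem IsDiscountedValue.exists_sum_abs_sub_succ_le [Finite S] [Nonempty I] [Nonempty J]
    (hg : ∀ s i j, g s i j ∈ Set.Icc (0 : ℝ) 1) {μ : ℕ → ℝ} (hμ : Antitone μ)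
    (hμ01 : ∀ n, μ n ∈ Set.Ioc (0 : ℝ) 1) {v : ℕ → S → ℝ}
    (hv : ∀ n, IsDiscountedValue q g (μ n) (v n)) (s₀ : S) :
    ∃ K, ∀ s : Finset ℕ, ∑ n ∈ s, |v n s₀ - v (n + 1) s₀| ≤ K := by
  classical
  have := Fintype.ofFinite S
  refine HasBoundedAlternation.exists_sum_abs_sub_succ_le
    (fun n => (hv n).mem_Icc (hμ01 n).1 (hμ01 n).2 hg s₀) ?_
  simp only [fun c n => (hv n).lt_apply_iff (hμ01 n).1 (hμ01 n).2 s₀ c]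
  refine HasBoundedAlternation.exists_pos_forall_sum_pos hμ (fun (a : S → I) (b : S → J) c n =>
    (levelMatrix (μ n) c s₀ (fun s => q s (a s) (b s)) fun s => g s (a s) (b s)).det)
    fun a b => ?_
  exact boundedDegreeFamilies.det_mem (levelMatrix_mem_boundedDegreeFamilies μ s₀ _ _)

end LevelSets

/-! ### Slowly varying discount factors -/

section SlowDiscounting

theorem exists_monotone_sum_Ico_mem_Icc {a : ℕ → ℝ} (ha : ∀ n, a n ≤ 1)
    (ha' : Tendsto (fun n => ∑ m ∈ Finset.range n, a m) atTop atTop) :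
    ∃ ν : ℕ → ℕ, Monotone ν ∧
      ∀ k, ∑ m ∈ Finset.Ico (ν k) (ν (k + 1)), a m ∈ Set.Icc (1 : ℝ) 3 := by
  classical
  have reaches (k : ℕ) : ∃ n, 2 * (k : ℝ) ≤ ∑ m ∈ Finset.range n, a m :=
    (ha'.eventually_ge_atTop _).exists
  let ν (k : ℕ) : ℕ := Nat.find (reaches k)
  have lower (k : ℕ) : 2 * (k : ℝ) ≤ ∑ m ∈ Finset.range (ν k), a m := Nat.find_spec (reaches k)
  have upper (k : ℕ) : ∑ m ∈ Finset.range (ν k), a m ≤ 2 * (k : ℝ) + 1 := by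
    cases h : ν k with
    | zero => rw [Finset.range_zero, Finset.sum_empty]; positivity
    | succ n =>
      have before : ∑ m ∈ Finset.range n, a m < 2 * (k : ℝ) :=
        not_le.1 (Nat.find_min (reaches k) (show n < ν k by omega))
      rw [Finset.sum_range_succ]
      exact add_le_add before.le (ha n)
  have mono : Monotone ν := monotone_nat_of_le_succ fun k =>
    Nat.find_min' _ (le_trans (by push_cast; linarith) (lower (k + 1)))
  refine ⟨ν, mono, fun k => ?_⟩
  rw [Finset.sum_Ico_eq_sub _ (mono k.le_succ)]
  have := lower (k + 1)
  have := upper (k + 1)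
  push_cast at *
  constructor <;> linarith [lower k, upper k]

theorem exists_slow_subsequence {μ d : ℕ → ℝ} {e : ℝ} (he : 0 < e) (hμ : Antitone μ)
    (h0 : ∀ n, 0 < μ n) (hd : ∀ n, d n ∈ Set.Icc 0 (e * μ n)) (hsum : Summable d)
    (hdiv : Tendsto (fun n => ∑ m ∈ Finset.range n, d m / μ m) atTop atTop) :
    ∃ ν : ℕ → ℕ, Monotone ν ∧ (Summable fun k => μ (ν k)) ∧
      ∀ k, ∑ m ∈ Finset.Ico (ν k) (ν (k + 1)), d m ≤ 3 * e * μ (ν k) := by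
  have pos (n : ℕ) : 0 < e * μ n := mul_pos he (h0 n)
  obtain ⟨ν, mono, hν⟩ := exists_monotone_sum_Ico_mem_Icc (a := fun n => d n / (e * μ n))
    (fun n => (div_le_one (pos n)).2 (hd n).2) (by
      have := hdiv.atTop_div_const he
      simpa only [Finset.sum_div, div_div, mul_comm] using this)
  have ratio_nonneg (n : ℕ) : 0 ≤ d n / (e * μ n) := div_nonneg (hd n).1 (pos n).le
  have mul_ratio (n : ℕ) : e * μ n * (d n / (e * μ n)) = d n := mul_div_cancel₀ _ (pos n).ne'
  have upper (k : ℕ) : ∑ m ∈ Finset.Ico (ν k) (ν (k + 1)), d m ≤ 3 * e * μ (ν k) :=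
    calc ∑ m ∈ Finset.Ico (ν k) (ν (k + 1)), d m
        ≤ ∑ m ∈ Finset.Ico (ν k) (ν (k + 1)), e * μ (ν k) * (d m / (e * μ m)) :=
          Finset.sum_le_sum fun m hm => (mul_ratio m).symm.trans_le <|
            mul_le_mul_of_nonneg_right
              (mul_le_mul_of_nonneg_left (hμ (Finset.mem_Ico.1 hm).1) he.le) (ratio_nonneg m)
      _ ≤ e * μ (ν k) * 3 := by
          rw [← Finset.mul_sum]; exact mul_le_mul_of_nonneg_left (hν k).2 (pos _).le
      _ = 3 * e * μ (ν k) := by ring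
  have lower (k : ℕ) : e * μ (ν (k + 1)) ≤ ∑ m ∈ Finset.Ico (ν k) (ν (k + 1)), d m :=
    calc e * μ (ν (k + 1))
        ≤ e * μ (ν (k + 1)) * ∑ m ∈ Finset.Ico (ν k) (ν (k + 1)), d m / (e * μ m) :=
          le_mul_of_one_le_right (pos _).le (hν k).1
      _ ≤ ∑ m ∈ Finset.Ico (ν k) (ν (k + 1)), d m := by
          rw [Finset.mul_sum]
          exact Finset.sum_le_sum fun m hm => le_trans (mul_le_mul_of_nonneg_right
            (mul_le_mul_of_nonneg_left (hμ (Finset.mem_Ico.1 hm).2.le) he.le) (ratio_nonneg m))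
              (mul_ratio m).le
  refine ⟨ν, mono, (summable_nat_add_iff 1).1 ?_, upper⟩
  refine (summable_mul_left_iff he.ne').1 <|
    summable_of_sum_range_le (c := ∑' n, d n) (fun k => (pos _).le) fun n => ?_
  calc ∑ k ∈ Finset.range n, e * μ (ν (k + 1))
      ≤ ∑ k ∈ Finset.range n, ∑ m ∈ Finset.Ico (ν k) (ν (k + 1)), d m :=
        Finset.sum_le_sum fun k _ => lower k
    _ = ∑ m ∈ Finset.Ico (ν 0) (ν n), d m := by
        rw [Finset.sum_Ico_eq_sub _ (mono n.zero_le),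
          ← Finset.sum_range_sub (fun k => ∑ m ∈ Finset.range (ν k), d m)]
        exact Finset.sum_congr rfl fun k _ => Finset.sum_Ico_eq_sub _ (mono k.le_succ)
    _ ≤ ∑' n, d n := hsum.sum_le_tsum _ fun n _ => (hd n).1

/-- The discount factors `1 / (1 + ρ (n + 1))`, with the increment `ρ` of their inverses. -/
def harmonicDiscount (ρ : ℝ) (n : ℕ) : ℝ :=
  (1 + ρ * (n + 1))⁻¹

section HarmonicDiscount

variable {ρ : ℝ}

theorem harmonicDiscount_mem_Ioc (hρ : 0 < ρ) (n : ℕ) : harmonicDiscount ρ n ∈ Set.Ioc 0 1 :=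
  have : 0 < ρ * ((n : ℝ) + 1) := by positivity
  ⟨inv_pos.2 (by positivity), inv_le_one_of_one_le₀ (by linarith)⟩

theorem harmonicDiscount_sub_succ (hρ : 0 < ρ) (n : ℕ) :
    harmonicDiscount ρ n - harmonicDiscount ρ (n + 1) =
      ρ * harmonicDiscount ρ n * harmonicDiscount ρ (n + 1) := by
  have h (n : ℕ) : 1 + ρ * ((n : ℝ) + 1) ≠ 0 := by positivity
  have := h n
  have := h (n + 1)
  simp only [harmonicDiscount]
  push_cast at *
  field_simp
  ring

theorem antitone_harmonicDiscount (hρ : 0 < ρ) : Antitone (harmonicDiscount ρ) :=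
  antitone_nat_of_succ_le fun n => by
    have h (n : ℕ) := (harmonicDiscount_mem_Ioc hρ n).1.le
    exact sub_nonneg.1 ((harmonicDiscount_sub_succ hρ n).symm ▸
      mul_nonneg (mul_nonneg hρ.le (h n)) (h _))

theorem tendsto_sum_harmonicDiscount_succ (hρ : 0 < ρ) :
    Tendsto (fun n => ∑ m ∈ Finset.range n, harmonicDiscount ρ (m + 1)) atTop atTop := by
  refine tendsto_atTop_mono (fun n => ?_)
    (Real.tendsto_sum_range_one_div_nat_succ_atTop.const_mul_atTop
      (show 0 < (1 + 2 * ρ)⁻¹ by positivity))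
  rw [Finset.mul_sum]
  refine Finset.sum_le_sum fun m _ => ?_
  rw [one_div, ← mul_inv]
  refine inv_anti₀ (by positivity) ?_
  push_cast
  nlinarith [mul_nonneg hρ.le m.cast_nonneg]

end HarmonicDiscount

variable {S I J : Type*} [Fintype I] [Fintype J] {q : S → I → J → S} {g : S → I → J → ℝ}

/-- A summable sequence of discount factors `l k`, with discounted values `w k`, along which both
vary slowly compared with the discount factors themselves. The strategy of Mertens and Neyman plays
optimally in a discounted game whose discount factor moves along such a sequence. -/
structure IsSlowDiscounting (q : S → I → J → S) (g : S → I → J → ℝ) (e δ : ℝ) (l : ℕ → ℝ)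
    (w : ℕ → S → ℝ) : Prop where
  isDiscountedValue : ∀ k, IsDiscountedValue q g (l k) (w k)
  mem_Ioc : ∀ k, l k ∈ Set.Ioc 0 1
  antitone : Antitone l
  sub_succ_le : ∀ k, l k - l (k + 1) ≤ e * l (k + 1)
  abs_sub_succ_le : ∀ k s, |w k s - w (k + 1) s| ≤ e * l (k + 1)
  sum_range_le : ∀ n, ∑ k ∈ Finset.range n, l k ≤ δ

theorem summable_dist_pi_prod {S : Type*} [Fintype S] {v : ℕ → S → ℝ} {μ : ℕ → ℝ}
    (hv : ∀ s, Summable fun n => dist (v n s) (v (n + 1) s))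
    (hμ : Summable fun n => dist (μ n) (μ (n + 1))) :
    Summable fun n => dist (v n, μ n) (v (n + 1), μ (n + 1)) := by
  refine .of_nonneg_of_le (fun n => dist_nonneg) (fun n => ?_)
    ((summable_sum fun s (_ : s ∈ Finset.univ) => hv s).add hμ)
  have nonneg : 0 ≤ ∑ s, dist (v n s) (v (n + 1) s) := Finset.sum_nonneg fun s _ => dist_nonneg
  refine max_le (le_add_of_le_of_nonneg ((dist_pi_le_iff nonneg).2 fun s => ?_) dist_nonneg)
    (le_add_of_nonneg_left nonneg)
  exact Finset.single_le_sum (f := fun s => dist (v n s) (v (n + 1) s)) (fun _ _ => dist_nonneg)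
    (Finset.mem_univ s)

theorem IsDiscountedValue.summable_dist_harmonicDiscount [Fintype S] [Nonempty I] [Nonempty J]
    (hg : ∀ s i j, g s i j ∈ Set.Icc (0 : ℝ) 1) {ρ : ℝ} (hρ : 0 < ρ) {v : ℕ → S → ℝ}
    (hv : ∀ n, IsDiscountedValue q g (harmonicDiscount ρ n) (v n)) :
    Summable fun n =>
      dist (v n, harmonicDiscount ρ n) (v (n + 1), harmonicDiscount ρ (n + 1)) := by
  have anti := antitone_harmonicDiscount hρ
  have mem := harmonicDiscount_mem_Ioc hρ
  refine summable_dist_pi_prod (fun s => ?_) ?_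
  · obtain ⟨K, hK⟩ := IsDiscountedValue.exists_sum_abs_sub_succ_le hg anti mem hv s
    exact summable_of_sum_le (fun n => dist_nonneg) hK
  · refine summable_of_sum_range_le (c := 1) (fun n => dist_nonneg) fun n => ?_
    calc ∑ m ∈ Finset.range n, dist (harmonicDiscount ρ m) (harmonicDiscount ρ (m + 1))
        = harmonicDiscount ρ 0 - harmonicDiscount ρ n := by
          rw [← Finset.sum_range_sub']
          exact Finset.sum_congr rfl fun m _ =>
            abs_of_nonneg (sub_nonneg.2 (anti m.le_succ))
      _ ≤ 1 := by linarith [(mem 0).2, (mem n).1]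

theorem IsDiscountedValue.dist_harmonicDiscount_le [Fintype S] [Nonempty I] [Nonempty J]
    (hg : ∀ s i j, g s i j ∈ Set.Icc (0 : ℝ) 1) {ρ : ℝ} (hρ : 0 < ρ) {v : ℕ → S → ℝ}
    (hv : ∀ n, IsDiscountedValue q g (harmonicDiscount ρ n) (v n)) (n : ℕ) :
    dist (v n, harmonicDiscount ρ n) (v (n + 1), harmonicDiscount ρ (n + 1)) ≤
      ρ * harmonicDiscount ρ n := by
  have mem := harmonicDiscount_mem_Ioc hρ
  have step := harmonicDiscount_sub_succ hρ n
  have nonneg : 0 ≤ ρ * harmonicDiscount ρ n := mul_nonneg hρ.le (mem n).1.le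
  have dist_eq : |harmonicDiscount ρ n - harmonicDiscount ρ (n + 1)| =
      ρ * harmonicDiscount ρ n * harmonicDiscount ρ (n + 1) := by
    rw [step, abs_of_nonneg (mul_nonneg nonneg (mem _).1.le)]
  refine max_le ((dist_pi_le_iff nonneg).2 fun s => ?_) ?_
  · refine ((hv n).abs_sub_le_div (mem n).1 (mem n).2 hg
      ((hv (n + 1)).mem_Icc (mem _).1 (mem _).2 hg) (hv (n + 1)) s).trans ?_
    rw [div_le_iff₀ (mem n).1, dist_eq]
    exact mul_le_mul_of_nonneg_left (antitone_harmonicDiscount hρ n.le_succ) nonneg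
  · exact dist_eq.trans_le (mul_le_of_le_one_right nonneg (mem _).2)

theorem exists_isSlowDiscounting [Finite S] [Nonempty I] [Nonempty J]
    (hg : ∀ s i j, g s i j ∈ Set.Icc (0 : ℝ) 1) {e δ : ℝ} (he : 0 < e) (he1 : e ≤ 1)
    (hδ : 0 < δ) : ∃ l w, IsSlowDiscounting q g e δ l w := by
  have := Fintype.ofFinite S
  have hρ : 0 < e / 6 := by positivity
  set μ := harmonicDiscount (e / 6)
  have anti : Antitone μ := antitone_harmonicDiscount hρ
  have mem (n : ℕ) : μ n ∈ Set.Ioc 0 1 := harmonicDiscount_mem_Ioc hρ n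
  choose v hv using fun n => exists_isDiscountedValue q g (mem n).1 (mem n).2
  let d (n : ℕ) : ℝ := dist (v n, μ n) (v (n + 1), μ (n + 1))
  have div : Tendsto (fun n => ∑ m ∈ Finset.range n, d m / μ m) atTop atTop := by
    refine tendsto_atTop_mono (fun n => ?_)
      ((tendsto_sum_harmonicDiscount_succ hρ).const_mul_atTop hρ)
    rw [Finset.mul_sum]
    refine Finset.sum_le_sum fun m _ => (le_div_iff₀ (mem m).1).2 ?_
    calc e / 6 * μ (m + 1) * μ m = μ m - μ (m + 1) := by
          rw [harmonicDiscount_sub_succ hρ]; ring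
      _ ≤ d m := (le_abs_self _).trans (le_max_right _ _)
  obtain ⟨ν, mono, summable, blocks⟩ := exists_slow_subsequence hρ anti (fun n => (mem n).1)
    (fun n => ⟨dist_nonneg, IsDiscountedValue.dist_harmonicDiscount_le hg hρ hv n⟩)
    (IsDiscountedValue.summable_dist_harmonicDiscount hg hρ hv) div
  have block_dist (k : ℕ) :
      dist (v (ν k), μ (ν k)) (v (ν (k + 1)), μ (ν (k + 1))) ≤ 3 * (e / 6) * μ (ν k) :=
    (dist_le_Ico_sum_dist (fun n => (v n, μ n)) (mono k.le_succ)).trans (blocks k)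
  have sub_le (k : ℕ) : μ (ν k) - μ (ν (k + 1)) ≤ 3 * (e / 6) * μ (ν k) :=
    (le_abs_self _).trans ((le_max_right _ _).trans (block_dist k))
  -- as `e ≤ 1`, the discount factor is at most halved by each step
  have slow (k : ℕ) : 3 * (e / 6) * μ (ν k) ≤ e * μ (ν (k + 1)) := by
    have : 3 * (e / 6) * μ (ν k) ≤ 1 / 2 * μ (ν k) :=
      mul_le_mul_of_nonneg_right (by linarith) (mem _).1.le
    nlinarith [sub_le k]
  obtain ⟨k₀, hk₀⟩ := ((tendsto_sum_nat_add fun k => μ (ν k)).eventually (gt_mem_nhds hδ)).exists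
  refine ⟨fun k => μ (ν (k + k₀)), fun k => v (ν (k + k₀)), fun k => hv _, fun k => mem _,
    fun a b h => anti (mono (by omega)), fun k => ?_, fun k s => ?_, fun n => ?_⟩
  · rw [add_right_comm]
    exact (sub_le _).trans (slow _)
  · rw [add_right_comm]
    exact (dist_le_pi_dist _ _ s).trans <| (le_max_left _ _).trans <|
      (block_dist _).trans (slow _)
  · exact (((summable_nat_add_iff k₀).2 summable).sum_le_tsum _ fun k _ => (mem _).1.le).trans
      hk₀.le

end SlowDiscounting

/-! ### The strategy of Mertens and Neyman -/

section MertensNeyman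

open scoped NNReal

section MixedAction

variable {I : Type*} [Fintype I]

/-- The lottery on `I` given by a point of the standard simplex. -/
def simplexPMF (x : stdSimplex ℝ I) : PMF I :=
  PMF.ofFintype (fun i => ENNReal.ofReal (x.1 i)) (by
    rw [← ENNReal.ofReal_sum_of_nonneg (fun i _ => x.2.1 i), x.2.2, ENNReal.ofReal_one])

theorem toReal_simplexPMF_apply (x : stdSimplex ℝ I) (i : I) :
    (simplexPMF x i).toReal = x.1 i := by
  simp only [simplexPMF, PMF.ofFintype_apply, ENNReal.toReal_ofReal (x.2.1 i)]

theorem toReal_pmf_mem_stdSimplex (p : PMF I) : (fun i => (p i).toReal) ∈ stdSimplex ℝ I := by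
  refine ⟨fun i => ENNReal.toReal_nonneg, ?_⟩
  rw [← ENNReal.toReal_sum fun i _ => p.apply_ne_top i,
    ← tsum_fintype (L := .unconditional I), p.tsum_coe, ENNReal.toReal_one]

end MixedAction

variable {X S I J : Type*}

/-- A lower bound `Φ` for the payoff of a strategy played by an automaton with memory `M`, which
reads the action pairs through `next`, is checked one stage at a time. -/
theorem le_expPay_foldl [Fintype I] [Fintype J] {M : Type*} {q : X → I → J → X} {g : X → I → J → ℝ}
    {next : M → I × J → M} {state : M → X}
    (hstate : ∀ z a, state (next z a) = q (state z) a.1 a.2) {p : M → PMF I} {Φ : ℕ → M → ℝ}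
    (h0 : ∀ z, Φ 0 z ≤ 0)
    (hsucc : ∀ n z j,
      Φ (n + 1) z ≤ ∑ i, (p z i).toReal * (g (state z) i j + Φ n (next z (i, j))))
    (τ : List (I × J) → PMF J) (z₀ : M) (n : ℕ) (h : List (I × J)) :
    Φ n (h.foldl next z₀) ≤
      expPay q g (fun h => p (h.foldl next z₀)) τ n (state (h.foldl next z₀)) h := by
  induction n generalizing h with
  | zero => exact h0 _
  | succ n ih =>
    set z := h.foldl next z₀
    have ih (i : I) (j : J) : Φ n (next z (i, j)) ≤
        expPay q g (fun h => p (h.foldl next z₀)) τ n (q (state z) i j) (h ++ [(i, j)]) := by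
      have := ih (h ++ [(i, j)])
      rwa [List.foldl_concat, hstate] at this
    calc Φ (n + 1) z
        ≤ ∑ j, (τ h j).toReal * ∑ i, (p z i).toReal * (g (state z) i j + Φ n (next z (i, j))) :=
          le_sum_mul_of_mem_stdSimplex (toReal_pmf_mem_stdSimplex _) (hsucc n z)
      _ = ∑ i, ∑ j, (p z i).toReal * (τ h j).toReal * (g (state z) i j + Φ n (next z (i, j))) := by
          rw [Finset.sum_comm]
          simp only [Finset.mul_sum, mul_left_comm, mul_assoc]
      _ ≤ _ := Finset.sum_le_sum fun i _ => Finset.sum_le_sum fun j _ =>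
          mul_le_mul_of_nonneg_left (by gcongr; exact ih i j) (by positivity)

theorem natFloor_eq_or_of_dist_le_one {s t : ℝ≥0} (h : dist s t ≤ 1) :
    ⌊s⌋₊ = ⌊t⌋₊ ∨ ⌊s⌋₊ = ⌊t⌋₊ + 1 ∨ ⌊t⌋₊ = ⌊s⌋₊ + 1 := by
  have key {s t : ℝ≥0} (h : dist s t ≤ 1) : ⌊s⌋₊ ≤ ⌊t⌋₊ + 1 := by
    rw [← Nat.floor_add_one zero_le]
    refine Nat.floor_mono (NNReal.coe_le_coe.1 ?_)
    push_cast
    linarith [(le_abs_self ((s : ℝ) - t)).trans h]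
  have := key h
  have := key (dist_comm s t ▸ h)
  omega

/-- The integral over `[0, s]` of the step function equal to `l k` on `[k, k + 1)`. -/
def stepIntegral (l : ℕ → ℝ) (s : ℝ≥0) : ℝ :=
  ∑ k ∈ Finset.range ⌊s⌋₊, l k + (s - ⌊s⌋₊) * l ⌊s⌋₊

theorem stepIntegral_le_sum {l : ℕ → ℝ} (hl : ∀ k, 0 ≤ l k) (s : ℝ≥0) :
    stepIntegral l s ≤ ∑ k ∈ Finset.range (⌊s⌋₊ + 1), l k := by
  have : (s : ℝ) < ⌊s⌋₊ + 1 := mod_cast Nat.lt_floor_add_one s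
  rw [Finset.sum_range_succ]
  exact add_le_add le_rfl (mul_le_of_le_one_left (hl _) (by linarith))

namespace IsSlowDiscounting

variable [Fintype I] [Fintype J] {q : S → I → J → S} {g : S → I → J → ℝ} {e δ : ℝ}
  {l : ℕ → ℝ} {w : ℕ → S → ℝ}

theorem sub_le_stepIntegral_sub (h : IsSlowDiscounting q g e δ l w) (he : 0 ≤ e) {s t : ℝ≥0}
    (hst : dist t s ≤ 1) :
    l ⌊s⌋₊ * (t - s) - e * l ⌊s⌋₊ ≤ stepIntegral l t - stepIntegral l s := by
  have hs : (⌊s⌋₊ : ℝ) ≤ s := mod_cast Nat.floor_le (zero_le (a := s))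
  have hs' : (s : ℝ) < ⌊s⌋₊ + 1 := mod_cast Nat.lt_floor_add_one s
  have ht : (⌊t⌋₊ : ℝ) ≤ t := mod_cast Nat.floor_le (zero_le (a := t))
  have ht' : (t : ℝ) < ⌊t⌋₊ + 1 := mod_cast Nat.lt_floor_add_one t
  unfold stepIntegral
  rcases natFloor_eq_or_of_dist_le_one hst with heq | heq | heq
  · rw [heq]
    linarith [mul_nonneg he (h.mem_Ioc ⌊s⌋₊).1.le]
  · rw [heq] at ht ht' ⊢
    rw [Finset.sum_range_succ]
    generalize ⌊s⌋₊ = k at *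
    push_cast at *
    have slope := h.antitone k.le_succ
    have drop : (t - (k + 1)) * (l k - l (k + 1)) ≤ 1 * (l k - l (k + 1)) :=
      mul_le_mul_of_nonneg_right (by linarith) (sub_nonneg.2 slope)
    linarith [h.sub_succ_le k, mul_le_mul_of_nonneg_left slope he]
  · rw [heq] at hs hs' ⊢
    rw [Finset.sum_range_succ]
    generalize ⌊t⌋₊ = k at *
    push_cast at *
    have drop : (k + 1 - t) * (l k - l (k + 1)) ≤ 1 * (l k - l (k + 1)) :=
      mul_le_mul_of_nonneg_right (by linarith) (sub_nonneg.2 (h.antitone k.le_succ))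
    linarith [h.sub_succ_le k]

theorem abs_sub_floor_le (h : IsSlowDiscounting q g e δ l w) (he : 0 ≤ e) {s t : ℝ≥0}
    (hst : dist t s ≤ 1) (x : S) : |w ⌊t⌋₊ x - w ⌊s⌋₊ x| ≤ e * l ⌊s⌋₊ := by
  rcases natFloor_eq_or_of_dist_le_one hst with heq | heq | heq
  · rw [heq, sub_self, abs_zero]
    exact mul_nonneg he (h.mem_Ioc _).1.le
  · rw [heq, abs_sub_comm]
    exact (h.abs_sub_succ_le _ _).trans
      (mul_le_mul_of_nonneg_left (h.antitone (Nat.le_succ _)) he)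
  · rw [heq]
    exact h.abs_sub_succ_le _ _

theorem value_mem_Icc [Finite S] [Nonempty I] [Nonempty J] (h : IsSlowDiscounting q g e δ l w)
    (hg : ∀ s i j, g s i j ∈ Set.Icc (0 : ℝ) 1) (k : ℕ) (s : S) : w k s ∈ Set.Icc (0 : ℝ) 1 :=
  (h.isDiscountedValue k).mem_Icc (h.mem_Ioc k).1 (h.mem_Ioc k).2 hg s

theorem stepIntegral_le (h : IsSlowDiscounting q g e δ l w) (s : ℝ≥0) : stepIntegral l s ≤ δ :=
  (stepIntegral_le_sum (fun k => (h.mem_Ioc k).1.le) s).trans (h.sum_range_le _)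

end IsSlowDiscounting

/-- One step of the strategy of Mertens and Neyman. The memory consists of the state and of a
statistic `z` which increases when the payoff exceeds the value; the discount factor `l ⌊z⌋₊` in
use decreases with `z`. -/
def statisticStep (q : S → I → J → S) (g : S → I → J → ℝ) (w : ℕ → S → ℝ) (ε : ℝ)
    (z : S × ℝ≥0) (a : I × J) : S × ℝ≥0 :=
  (q z.1 a.1 a.2,
    (z.2 + (g z.1 a.1 a.2 - w ⌊z.2⌋₊ (q z.1 a.1 a.2) + ε) / 2).toNNReal)

/-- The quantity whose conditional expectation increases under the strategy of Mertens and
Neyman. -/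
def statisticPotential (l : ℕ → ℝ) (w : ℕ → S → ℝ) (z : S × ℝ≥0) : ℝ :=
  w ⌊z.2⌋₊ z.1 + 2 * stepIntegral l z.2

section Statistic

variable {q : S → I → J → S} {g : S → I → J → ℝ} {e δ ε : ℝ} {l : ℕ → ℝ} {w : ℕ → S → ℝ}

theorem coe_statisticStep_snd (q : S → I → J → S) (g : S → I → J → ℝ) (w : ℕ → S → ℝ) (ε : ℝ)
    (z : S × ℝ≥0) (a : I × J) : ((statisticStep q g w ε z a).2 : ℝ) =
      max (z.2 + (g z.1 a.1 a.2 - w ⌊z.2⌋₊ (q z.1 a.1 a.2) + ε) / 2) 0 :=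
  Real.coe_toNNReal' _

theorem dist_statisticStep_le_one (hg : ∀ s i j, g s i j ∈ Set.Icc (0 : ℝ) 1)
    (hw : ∀ k s, w k s ∈ Set.Icc (0 : ℝ) 1) (hε : ε ∈ Set.Icc (0 : ℝ) 1) (z : S × ℝ≥0)
    (a : I × J) : dist (statisticStep q g w ε z a).2 z.2 ≤ 1 := by
  have := hg z.1 a.1 a.2
  have := hw ⌊z.2⌋₊ (q z.1 a.1 a.2)
  simp only [Set.mem_Icc] at *
  rw [NNReal.dist_eq, coe_statisticStep_snd, abs_le]
  constructor
  · linarith [le_max_left (z.2 + (g z.1 a.1 a.2 - w ⌊z.2⌋₊ (q z.1 a.1 a.2) + ε) / 2) 0]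
  · rw [sub_le_iff_le_add']
    exact max_le (by linarith) (by positivity)

theorem sub_le_payoff_add_statistic (hg : ∀ s i j, g s i j ∈ Set.Icc (0 : ℝ) 1)
    (hw : ∀ k s, w k s ∈ Set.Icc (0 : ℝ) 1) (hε : 0 ≤ ε) (z : S × ℝ≥0) (i : I) (j : J) :
    w ⌊z.2⌋₊ (q z.1 i j) - ε - (if ⌊z.2⌋₊ = 0 then 1 else 0) ≤
      g z.1 i j + 2 * z.2 - 2 * (statisticStep q g w ε z (i, j)).2 := by
  have payoff := hg z.1 i j
  have value := hw ⌊z.2⌋₊ (q z.1 i j)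
  rw [coe_statisticStep_snd]
  rcases le_total (z.2 + (g z.1 i j - w ⌊z.2⌋₊ (q z.1 i j) + ε) / 2) 0 with h | h
  · have floor : ⌊z.2⌋₊ = 0 := Nat.floor_eq_zero.2 <| NNReal.coe_lt_coe.1 <| by
      push_cast
      linarith [payoff.1, value.2]
    rw [max_eq_right h, if_pos floor]
    linarith [payoff.1, value.2, z.2.coe_nonneg]
  · rw [max_eq_left h]
    split_ifs <;> linarith

variable [Fintype I] [Fintype J]

theorem IsSlowDiscounting.le_potential_step_sub (h : IsSlowDiscounting q g e δ l w)
    (hg : ∀ s i j, g s i j ∈ Set.Icc (0 : ℝ) 1) (hw : ∀ k s, w k s ∈ Set.Icc (0 : ℝ) 1)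
    (he : 0 ≤ e) (heε : 6 * e ≤ ε) (hε1 : ε ≤ 1) (z : S × ℝ≥0) (i : I) (j : J) :
    l ⌊z.2⌋₊ * g z.1 i j + (1 - l ⌊z.2⌋₊) * w ⌊z.2⌋₊ (q z.1 i j) - w ⌊z.2⌋₊ z.1 +
        l ⌊z.2⌋₊ * (ε / 2) ≤
      statisticPotential l w (statisticStep q g w ε z (i, j)) - statisticPotential l w z := by
  have close := dist_statisticStep_le_one (q := q) hg hw ⟨by linarith, hε1⟩ z (i, j)
  have integral := h.sub_le_stepIntegral_sub he close
  have value := (abs_le.1 (h.abs_sub_floor_le he close (q z.1 i j))).1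
  have statistic : l ⌊z.2⌋₊ * ((g z.1 i j - w ⌊z.2⌋₊ (q z.1 i j) + ε) / 2) ≤
      l ⌊z.2⌋₊ * ((statisticStep q g w ε z (i, j)).2 - z.2) := by
    refine mul_le_mul_of_nonneg_left (le_sub_iff_add_le'.2 ?_) (h.mem_Ioc _).1.le
    exact (le_max_left _ _).trans_eq (coe_statisticStep_snd q g w ε z (i, j)).symm
  have slack := mul_le_mul_of_nonneg_right heε (h.mem_Ioc ⌊z.2⌋₊).1.le
  have state : (statisticStep q g w ε z (i, j)).1 = q z.1 i j := rfl
  simp only [statisticPotential, state]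
  linarith

theorem IsSlowDiscounting.potential_le (h : IsSlowDiscounting q g e δ l w)
    (hw : ∀ k s, w k s ∈ Set.Icc (0 : ℝ) 1) (z : S × ℝ≥0) :
    statisticPotential l w z ≤ 1 + 2 * δ := by
  linarith [(hw ⌊z.2⌋₊ z.1).2, h.stepIntegral_le z.2,
    show statisticPotential l w z = w ⌊z.2⌋₊ z.1 + 2 * stepIntegral l z.2 from rfl]

/-- A lower bound for the payoff over `n` stages of the strategy of Mertens and Neyman with memory
`z`. The last term pays for the stages at which the statistic is truncated at `0`: at those the
discount factor is `l 0`, so each of them increases the potential substantially. -/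
def payoffLowerBound (l : ℕ → ℝ) (w : ℕ → S → ℝ) (ε δ : ℝ) (n : ℕ) (z : S × ℝ≥0) : ℝ :=
  n * (statisticPotential l w z - (2 * ε + 2 * δ)) - 2 * z.2 -
    2 / (ε * l 0) * (1 + 2 * δ - statisticPotential l w z)

theorem IsSlowDiscounting.payoffLowerBound_succ_le (h : IsSlowDiscounting q g e δ l w)
    (hg : ∀ s i j, g s i j ∈ Set.Icc (0 : ℝ) 1) (hw : ∀ k s, w k s ∈ Set.Icc (0 : ℝ) 1)
    (he : 0 ≤ e) (heε : 6 * e ≤ ε) (hε1 : ε ≤ 1) (n : ℕ) (z : S × ℝ≥0) (i : I) (j : J) :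
    payoffLowerBound l w ε δ (n + 1) z + (n + 1 + 2 / (ε * l 0)) *
        (statisticPotential l w (statisticStep q g w ε z (i, j)) - statisticPotential l w z) -
        (if ⌊z.2⌋₊ = 0 then 1 else 0) ≤
      g z.1 i j + payoffLowerBound l w ε δ n (statisticStep q g w ε z (i, j)) := by
  have close := dist_statisticStep_le_one (q := q) hg hw ⟨by linarith, hε1⟩ z (i, j)
  have value := (abs_le.1 (h.abs_sub_floor_le he close (q z.1 i j))).2
  have slack : e * l ⌊z.2⌋₊ ≤ ε := by
    linarith [mul_le_of_le_one_right he (h.mem_Ioc ⌊z.2⌋₊).2]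
  have payoff := sub_le_payoff_add_statistic (q := q) hg hw (by linarith : 0 ≤ ε) z i j
  have potential :
      statisticPotential l w (statisticStep q g w ε z (i, j)) - (2 * ε + 2 * δ) ≤
        w ⌊z.2⌋₊ (q z.1 i j) - ε := by
    linarith [h.stepIntegral_le (statisticStep q g w ε z (i, j)).2,
      show statisticPotential l w (statisticStep q g w ε z (i, j)) =
        w ⌊(statisticStep q g w ε z (i, j)).2⌋₊ (q z.1 i j) +
          2 * stepIntegral l (statisticStep q g w ε z (i, j)).2 from rfl]
  unfold payoffLowerBound
  push_cast
  linarith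

theorem IsSlowDiscounting.payoffLowerBound_succ_le_sum (h : IsSlowDiscounting q g e δ l w)
    (hg : ∀ s i j, g s i j ∈ Set.Icc (0 : ℝ) 1) (hw : ∀ k s, w k s ∈ Set.Icc (0 : ℝ) 1)
    (he : 0 ≤ e) (heε : 6 * e ≤ ε) (hε : 0 < ε) (hε1 : ε ≤ 1) (n : ℕ) {z : S × ℝ≥0} {j : J}
    {x : I → ℝ} (hx : x ∈ stdSimplex ℝ I)
    (hopt : w ⌊z.2⌋₊ z.1 ≤
      ∑ i, x i * (l ⌊z.2⌋₊ * g z.1 i j + (1 - l ⌊z.2⌋₊) * w ⌊z.2⌋₊ (q z.1 i j))) :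
    payoffLowerBound l w ε δ (n + 1) z ≤
      ∑ i, x i * (g z.1 i j + payoffLowerBound l w ε δ n (statisticStep q g w ε z (i, j))) := by
  have hl := (h.mem_Ioc ⌊z.2⌋₊).1
  have hl0 := (h.mem_Ioc 0).1
  set K := n + 1 + 2 / (ε * l 0)
  set D : ℝ := if ⌊z.2⌋₊ = 0 then 1 else 0
  set L := payoffLowerBound l w ε δ (n + 1) z
  have hK : 0 < K := by positivity
  have truncation : D ≤ K * (l ⌊z.2⌋₊ * (ε / 2)) := by
    simp only [D]
    split_ifs with h0
    · calc (1 : ℝ) = 2 / (ε * l 0) * (l 0 * (ε / 2)) := by field_simp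
        _ ≤ K * (l ⌊z.2⌋₊ * (ε / 2)) := by
            rw [h0]
            exact mul_le_mul_of_nonneg_right (le_add_of_nonneg_left (by positivity))
              (by positivity)
    · positivity
  let U (i : I) : ℝ := l ⌊z.2⌋₊ * g z.1 i j + (1 - l ⌊z.2⌋₊) * w ⌊z.2⌋₊ (q z.1 i j)
  calc L ≤ K * ∑ i, x i * U i - (K * w ⌊z.2⌋₊ z.1 - K * (l ⌊z.2⌋₊ * (ε / 2)) + D - L) := by
        linarith [mul_le_mul_of_nonneg_left hopt hK.le]
    _ = ∑ i, x i * (L + K * (U i - w ⌊z.2⌋₊ z.1 + l ⌊z.2⌋₊ * (ε / 2)) - D) := by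
        rw [← one_mul (_ - L), ← hx.2, Finset.mul_sum, Finset.sum_mul, ← Finset.sum_sub_distrib]
        exact Finset.sum_congr rfl fun i _ => by ring
    _ ≤ _ := by
        refine Finset.sum_le_sum fun i _ => mul_le_mul_of_nonneg_left ?_ (hx.1 i)
        refine le_trans ?_ (h.payoffLowerBound_succ_le hg hw he heε hε1 n z i j)
        gcongr
        exact h.le_potential_step_sub hg hw he heε hε1 z i j

theorem IsSlowDiscounting.exists_forall_payoffLowerBound_le [Finite S] [Nonempty I] [Nonempty J]
    (h : IsSlowDiscounting q g e δ l w) (hg : ∀ s i j, g s i j ∈ Set.Icc (0 : ℝ) 1)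
    (he : 0 ≤ e) (heε : 6 * e ≤ ε) (hε : 0 < ε) (hε1 : ε ≤ 1) (s₁ : S) :
    ∃ σ : List (I × J) → PMF I, ∀ τ n,
      payoffLowerBound l w ε δ n (s₁, 0) ≤ expPay q g σ τ n s₁ [] := by
  have hw := h.value_mem_Icc hg
  choose x hx hopt using fun k s => ((h.isDiscountedValue k) s).1
  refine ⟨_, fun τ n => le_expPay_foldl (next := statisticStep q g w ε) (state := Prod.fst)
    (p := fun z => simplexPMF ⟨x ⌊z.2⌋₊ z.1, hx _ _⟩) (Φ := payoffLowerBound l w ε δ)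
    (fun z a => rfl) (fun z => ?_) (fun n z j => ?_) τ (s₁, 0) n []⟩
  · have hl0 := (h.mem_Ioc 0).1
    have : 0 ≤ 2 / (ε * l 0) * (1 + 2 * δ - statisticPotential l w z) :=
      mul_nonneg (by positivity) (sub_nonneg.2 (h.potential_le hw z))
    simp only [payoffLowerBound, Nat.cast_zero, zero_mul]
    linarith [z.2.coe_nonneg]
  · simp only [toReal_simplexPMF_apply]
    exact h.payoffLowerBound_succ_le_sum hg hw he heε hε hε1 n (hx _ _) (hopt _ _ j)

theorem IsSlowDiscounting.exists_forall_le_gamePayoff [Finite S] [Nonempty I] [Nonempty J]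
    (h : IsSlowDiscounting q g e δ l w) (hg : ∀ s i j, g s i j ∈ Set.Icc (0 : ℝ) 1)
    (he : 0 ≤ e) (heε : 6 * e ≤ ε) (hε : 0 < ε) (hε1 : ε ≤ 1) (s₁ : S) :
    ∃ (σ : List (I × J) → PMF I) (N : ℕ), ∀ τ, ∀ n ≥ N,
      w 0 s₁ - (3 * ε + 2 * δ) ≤ gamePayoff q g σ τ s₁ n := by
  obtain ⟨σ, hσ⟩ := h.exists_forall_payoffLowerBound_le hg he heε hε hε1 s₁
  have potential : statisticPotential l w (s₁, 0) = w 0 s₁ := by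
    simp [statisticPotential, stepIntegral]
  set R : ℝ := 2 / (ε * l 0) * (1 + 2 * δ - w 0 s₁)
  obtain ⟨N, hN⟩ := exists_nat_ge (R / ε)
  refine ⟨σ, N + 1, fun τ n hn => ?_⟩
  have hn0 : (0 : ℝ) < n := by exact_mod_cast N.succ_pos.trans_le hn
  have remainder : R ≤ ε * n := by
    rw [div_le_iff₀' hε] at hN
    exact hN.trans (mul_le_mul_of_nonneg_left (by exact_mod_cast N.le_succ.trans hn) hε.le)
  have bound := hσ τ n
  simp only [payoffLowerBound, potential, NNReal.coe_zero] at bound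
  rw [gamePayoff, one_div, ← div_eq_inv_mul, le_div_iff₀ hn0]
  linarith

end Statistic

end MertensNeyman

/-! ### Uniform value of finite games -/

section UniformValue

variable {X S I J : Type*} [Fintype I] [Fintype J]

/-- Player 1 has a strategy whose average payoff is eventually at least `u`, uniformly in the
strategy of player 2. -/
def Secures1 (q : X → I → J → X) (g : X → I → J → ℝ) (x : X) (u : ℝ) : Prop :=
  ∃ (σ : List (I × J) → PMF I) (N : ℕ), ∀ τ, ∀ n ≥ N, u ≤ gamePayoff q g σ τ x n

/-- Player 2 has a strategy whose average payoff is eventually at most `u`, uniformly in the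
strategy of player 1. -/
def Secures2 (q : X → I → J → X) (g : X → I → J → ℝ) (x : X) (u : ℝ) : Prop :=
  ∃ (τ : List (I × J) → PMF J) (N : ℕ), ∀ σ, ∀ n ≥ N, gamePayoff q g σ τ x n ≤ u

theorem expPay_mul_add (q : X → I → J → X) (g : X → I → J → ℝ) (a b : ℝ)
    (σ : List (I × J) → PMF I) (τ : List (I × J) → PMF J) (n : ℕ) (x : X) (h : List (I × J)) :
    expPay q (fun x i j => a * g x i j + b) σ τ n x h = a * expPay q g σ τ n x h + n * b := by
  induction n generalizing x h with
  | zero => simp [expPay]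
  | succ n ih =>
    have total : ∑ i, ∑ j, (σ h i).toReal * (τ h j).toReal * ((n + 1) * b) = (n + 1) * b := by
      simp only [← Finset.sum_mul, ← Finset.mul_sum, (toReal_pmf_mem_stdSimplex (σ h)).2,
        (toReal_pmf_mem_stdSimplex (τ h)).2, one_mul]
    rw [Nat.cast_succ, ← total]
    simp only [expPay, ih, Finset.mul_sum, ← Finset.sum_add_distrib]
    exact Finset.sum_congr rfl fun i _ => Finset.sum_congr rfl fun j _ => by ring

theorem expPay_swap (q : X → I → J → X) (g : X → I → J → ℝ) (σ : List (I × J) → PMF I)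
    (τ : List (J × I) → PMF J) (n : ℕ) (x : X) (h : List (I × J)) :
    expPay q g σ (fun h => τ (h.map Prod.swap)) n x h =
      expPay (fun x j i => q x i j) (fun x j i => g x i j) τ (fun h => σ (h.map Prod.swap)) n x
        (h.map Prod.swap) := by
  induction n generalizing x h with
  | zero => rfl
  | succ n ih =>
    simp only [expPay, ih]
    rw [Finset.sum_comm, List.map_map, Prod.swap_swap_eq, List.map_id]
    simp only [List.map_append, List.map_cons, List.map_nil, Prod.swap_prod_mk, mul_comm]

theorem expPay_mono_of_rel {q : X → I → J → X} {g : X → I → J → ℝ} {q' : S → I → J → S}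
    {g' : S → I → J → ℝ} {R : X → S → Prop} (hq : ∀ x s i j, R x s → R (q x i j) (q' s i j))
    (hg : ∀ x s i j, R x s → g x i j ≤ g' s i j) (σ : List (I × J) → PMF I)
    (τ : List (I × J) → PMF J) (n : ℕ) {x : X} {s : S} (hxs : R x s) (h : List (I × J)) :
    expPay q g σ τ n x h ≤ expPay q' g' σ τ n s h := by
  induction n generalizing x s h with
  | zero => exact le_rfl
  | succ n ih =>
    exact Finset.sum_le_sum fun i _ => Finset.sum_le_sum fun j _ => mul_le_mul_of_nonneg_left
      (add_le_add (hg x s i j hxs) (ih (hq x s i j hxs) _)) (by positivity)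

theorem gamePayoff_mul_add (q : X → I → J → X) (g : X → I → J → ℝ) (a b : ℝ)
    (σ : List (I × J) → PMF I) (τ : List (I × J) → PMF J) (x : X) {n : ℕ} (hn : n ≠ 0) :
    gamePayoff q (fun x i j => a * g x i j + b) σ τ x n = a * gamePayoff q g σ τ x n + b := by
  have : (n : ℝ) ≠ 0 := Nat.cast_ne_zero.2 hn
  simp only [gamePayoff, expPay_mul_add]
  field_simp

theorem gamePayoff_mono_of_rel {q : X → I → J → X} {g : X → I → J → ℝ} {q' : S → I → J → S}
    {g' : S → I → J → ℝ} {R : X → S → Prop} (hq : ∀ x s i j, R x s → R (q x i j) (q' s i j))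
    (hg : ∀ x s i j, R x s → g x i j ≤ g' s i j) (σ : List (I × J) → PMF I)
    (τ : List (I × J) → PMF J) (n : ℕ) {x : X} {s : S} (hxs : R x s) :
    gamePayoff q g σ τ x n ≤ gamePayoff q' g' σ τ s n :=
  mul_le_mul_of_nonneg_left (expPay_mono_of_rel hq hg σ τ n hxs []) (by positivity)

namespace Secures1

variable {q : X → I → J → X} {g : X → I → J → ℝ} {x : X} {u v : ℝ}

theorem mono (h : Secures1 q g x u) (hvu : v ≤ u) : Secures1 q g x v :=
  let ⟨σ, N, hσ⟩ := h
  ⟨σ, N, fun τ n hn => hvu.trans (hσ τ n hn)⟩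

theorem le (h : Secures1 q g x u) (h' : Secures2 q g x v) : u ≤ v :=
  let ⟨σ, N, hσ⟩ := h
  let ⟨τ, M, hτ⟩ := h'
  (hσ τ (max N M) (le_max_left _ _)).trans (hτ σ _ (le_max_right _ _))

theorem mul_add (h : Secures1 q g x u) {a : ℝ} (ha : 0 ≤ a) (b : ℝ) :
    Secures1 q (fun x i j => a * g x i j + b) x (a * u + b) := by
  obtain ⟨σ, N, hσ⟩ := h
  refine ⟨σ, N + 1, fun τ n hn => ?_⟩
  rw [gamePayoff_mul_add _ _ _ _ _ _ _ (by omega)]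
  gcongr
  exact hσ τ n (by omega)

theorem of_rel {q' : S → I → J → S} {g' : S → I → J → ℝ} {s : S} {R : X → S → Prop}
    (hq : ∀ x s i j, R x s → R (q x i j) (q' s i j))
    (hg : ∀ x s i j, R x s → g x i j ≤ g' s i j) (hxs : R x s) (h : Secures1 q g x u) :
    Secures1 q' g' s u :=
  let ⟨σ, N, hσ⟩ := h
  ⟨σ, N, fun τ n hn => (hσ τ n hn).trans (gamePayoff_mono_of_rel hq hg σ τ n hxs)⟩

end Secures1

namespace Secures2

variable {q : X → I → J → X} {g : X → I → J → ℝ} {x : X} {u v : ℝ}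

theorem mono (h : Secures2 q g x u) (huv : u ≤ v) : Secures2 q g x v :=
  let ⟨τ, N, hτ⟩ := h
  ⟨τ, N, fun σ n hn => (hτ σ n hn).trans huv⟩

theorem of_rel {q' : S → I → J → S} {g' : S → I → J → ℝ} {s : S} {R : X → S → Prop}
    (hq : ∀ x s i j, R x s → R (q x i j) (q' s i j))
    (hg : ∀ x s i j, R x s → g x i j ≤ g' s i j) (hxs : R x s) (h : Secures2 q' g' s u) :
    Secures2 q g x u :=
  let ⟨τ, N, hτ⟩ := h
  ⟨τ, N, fun σ n hn => (gamePayoff_mono_of_rel hq hg σ τ n hxs).trans (hτ σ n hn)⟩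

theorem mul_add (h : Secures2 q g x u) {a : ℝ} (ha : 0 ≤ a) (b : ℝ) :
    Secures2 q (fun x i j => a * g x i j + b) x (a * u + b) := by
  obtain ⟨τ, N, hτ⟩ := h
  refine ⟨τ, N + 1, fun σ n hn => ?_⟩
  rw [gamePayoff_mul_add _ _ _ _ _ _ _ (by omega)]
  gcongr
  exact hτ σ n (by omega)

theorem of_secures1_neg (h : Secures1 (fun x j i => q x i j) (fun x j i => -g x i j) x (-u)) :
    Secures2 q g x u := by
  obtain ⟨τ, N, hτ⟩ := h
  refine ⟨fun h => τ (h.map Prod.swap), N, fun σ n hn => neg_le_neg_iff.1 ?_⟩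
  have swap := expPay_swap q g σ τ n x []
  have neg := expPay_mul_add (fun x j i => q x i j) (fun x j i => g x i j) (-1) 0 τ
    (fun h => σ (h.map Prod.swap)) n x []
  simp only [neg_one_mul, add_zero, mul_zero] at neg
  refine (hτ (fun h => σ (h.map Prod.swap)) n hn).trans_eq ?_
  rw [gamePayoff, neg, gamePayoff, swap, List.map_nil, mul_neg]

end Secures2

variable {q : X → I → J → X} {g : X → I → J → ℝ} {x : X}

theorem exists_uniform_value_of_forall_exists_secures
    (h : ∀ ε > (0 : ℝ), ∃ v, Secures1 q g x (v - ε) ∧ Secures2 q g x (v + ε)) :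
    ∃ v, Guarantees1 q g x v ∧ Guarantees2 q g x v := by
  obtain ⟨v₁, lower, upper⟩ := h 1 one_pos
  have bdd : BddAbove {u | Secures1 q g x u} := ⟨v₁ + 1, fun u hu => hu.le upper⟩
  refine ⟨sSup {u | Secures1 q g x u}, fun ε hε => ?_, fun ε hε => ?_⟩
  · have nonempty : {u | Secures1 q g x u}.Nonempty := ⟨_, lower⟩
    obtain ⟨u, hu, hlt⟩ := exists_lt_of_lt_csSup nonempty (sub_lt_self _ hε)
    exact hu.mono hlt.le
  · obtain ⟨v, hv₁, hv₂⟩ := h (ε / 2) (half_pos hε)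
    have : v - ε / 2 ≤ sSup {u | Secures1 q g x u} := le_csSup bdd hv₁
    exact hv₂.mono (by linarith)

section FiniteGame

variable {q : S → I → J → S} {g : S → I → J → ℝ}

theorem exists_affine_mem_Icc {α : Type*} [Finite α] (f : α → ℝ) :
    ∃ a > (0 : ℝ), ∃ b, ∀ x, (f x - b) / a ∈ Set.Icc (0 : ℝ) 1 := by
  obtain ⟨C, hC⟩ := (Set.finite_range f).bddAbove
  obtain ⟨b, hb⟩ := (Set.finite_range f).bddBelow
  have width : 0 < |C - b| + 1 := by positivity
  refine ⟨|C - b| + 1, width, b, fun x => ?_⟩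
  have hbx : b ≤ f x := hb ⟨x, rfl⟩
  have hxC : f x ≤ C := hC ⟨x, rfl⟩
  exact ⟨div_nonneg (sub_nonneg.2 hbx) width.le,
    (div_le_one width).2 (by linarith [le_abs_self (C - b)])⟩

theorem IsSlowDiscounting.one_sub_swap {e δ : ℝ} {l : ℕ → ℝ} {w : ℕ → S → ℝ}
    (h : IsSlowDiscounting q g e δ l w) :
    IsSlowDiscounting (fun s j i => q s i j) (fun s j i => 1 - g s i j) e δ l
      (fun k s => 1 - w k s) where
  isDiscountedValue k := (h.isDiscountedValue k).const_sub_swap 1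
  mem_Ioc := h.mem_Ioc
  antitone := h.antitone
  sub_succ_le := h.sub_succ_le
  abs_sub_succ_le k s := by
    rw [sub_sub_sub_cancel_left, abs_sub_comm]
    exact h.abs_sub_succ_le k s
  sum_range_le := h.sum_range_le

variable [Finite S] [Nonempty I] [Nonempty J]

theorem exists_secures_of_mem_Icc (hg : ∀ s i j, g s i j ∈ Set.Icc (0 : ℝ) 1) (s₁ : S) {ε : ℝ}
    (hε : 0 < ε) : ∃ v, Secures1 q g s₁ (v - ε) ∧
      Secures1 (fun s j i => q s i j) (fun s j i => 1 - g s i j) s₁ (1 - v - ε) := by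
  let a := min ε 1 / 5
  have ha : 0 < a := by positivity
  have ha1 : a ≤ 1 := by linarith [min_le_right ε 1, show a = min ε 1 / 5 from rfl]
  have haε : 3 * a + 2 * a ≤ ε := by linarith [min_le_left ε 1, show a = min ε 1 / 5 from rfl]
  obtain ⟨l, w, hlw⟩ := exists_isSlowDiscounting (q := q) hg (e := a / 6) (by positivity)
    (by linarith) ha
  refine ⟨w 0 s₁, ?_, ?_⟩
  · obtain secures : Secures1 q g s₁ (w 0 s₁ - (3 * a + 2 * a)) :=
      hlw.exists_forall_le_gamePayoff hg (by positivity) (by linarith) ha ha1 s₁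
    exact secures.mono (by linarith)
  · obtain secures : Secures1 _ _ s₁ (1 - w 0 s₁ - (3 * a + 2 * a)) :=
      hlw.one_sub_swap.exists_forall_le_gamePayoff
        (fun s j i => Set.Icc.mem_iff_one_sub_mem.1 (hg s i j)) (by positivity) (by linarith) ha
        ha1 s₁
    exact secures.mono (by linarith)

theorem exists_secures_of_finite (q : S → I → J → S) (g : S → I → J → ℝ) (s₁ : S) {ε : ℝ}
    (hε : 0 < ε) : ∃ v, Secures1 q g s₁ (v - ε) ∧ Secures2 q g s₁ (v + ε) := by
  obtain ⟨a, ha, b, hab⟩ := exists_affine_mem_Icc fun p : S × I × J => g p.1 p.2.1 p.2.2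
  obtain ⟨v, hv₁, hv₂⟩ := exists_secures_of_mem_Icc (q := q)
    (g := fun s i j => (g s i j - b) / a) (fun s i j => hab (s, i, j)) s₁ (div_pos hε ha)
  refine ⟨a * v + b, ?_, .of_secures1_neg ?_⟩
  · convert hv₁.mul_add ha.le b using 4
    · field_simp
      ring
    · field_simp
      ring
  · convert hv₂.mul_add ha.le (-(a + b)) using 4
    · field_simp
      ring
    · field_simp
      ring

end FiniteGame

end UniformValue

/-! ### Almost periodicity of nonexpansive orbits -/

section AlmostPeriodicity

/-- Along some arithmetic progression the orbit of `x` stays `ε`-close to the first point of the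
progression, for every `ε > 0`. -/
def AlmostEventuallyPeriodic {X : Type*} [PseudoMetricSpace X] (T : X → X) (x : X) : Prop :=
  ∀ ε > (0 : ℝ), ∃ M p, 0 < p ∧ ∀ k, dist (T^[M + p * k] x) (T^[M] x) ≤ ε

/-- A sequence on which the shift acts isometrically. -/
def IsometricShift {X : Type*} [PseudoMetricSpace X] (b : ℕ → X) : Prop :=
  ∀ n r k, dist (b (n + k)) (b (r + k)) = dist (b n) (b r)

section Orbit

variable {X : Type*} [PseudoMetricSpace X] {T : X → X}

theorem dist_iterate_le (hT : LipschitzWith 1 T) (n : ℕ) (x y : X) :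
    dist (T^[n] x) (T^[n] y) ≤ dist x y := by
  simpa using (hT.iterate n).dist_le_mul x y

theorem mapClusterPt_iterate_self (hT : LipschitzWith 1 T) {x y : X}
    (hy : MapClusterPt y atTop fun n => T^[n] x) : MapClusterPt y atTop fun n => T^[n] y := by
  refine Metric.nhds_basis_ball.mapClusterPt_iff_frequently.2 fun ε hε =>
    frequently_atTop.2 fun K => ?_
  have visits := fun N => frequently_atTop.1
    (mapClusterPt_iff_frequently.1 hy _ (Metric.ball_mem_nhds y (half_pos hε))) N
  obtain ⟨m, -, hm⟩ := visits 0
  obtain ⟨n, hn, hny⟩ := visits (m + K)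
  refine ⟨n - m, by omega, ?_⟩
  calc dist (T^[n - m] y) y
      ≤ dist (T^[n - m] y) (T^[n - m] (T^[m] x)) + dist (T^[n - m] (T^[m] x)) y :=
        dist_triangle _ _ _
    _ ≤ dist y (T^[m] x) + dist (T^[n] x) y := by
        rw [← Function.iterate_add_apply, Nat.sub_add_cancel (by omega)]
        gcongr
        simpa only [← Function.iterate_add_apply, Nat.sub_add_cancel (show m ≤ n by omega)]
          using dist_iterate_le hT (n - m) y (T^[m] x)
    _ < ε / 2 + ε / 2 := add_lt_add (by rwa [dist_comm]) hny
    _ = ε := add_halves ε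

theorem isometricShift_iterate (hT : LipschitzWith 1 T) {y : X}
    (hy : MapClusterPt y atTop fun n => T^[n] y) : IsometricShift fun n => T^[n] y := by
  refine fun n r k => le_antisymm ?_ (le_of_forall_pos_le_add fun ε hε => ?_)
  · simpa only [← Function.iterate_add_apply, add_comm k]
      using dist_iterate_le hT k (T^[n] y) (T^[r] y)
  obtain ⟨m, hm, hmy⟩ := frequently_atTop.1
    (mapClusterPt_iff_frequently.1 hy _ (Metric.ball_mem_nhds y (half_pos hε))) k
  have return_dist (a : ℕ) : dist (T^[m - k] (T^[a + k] y)) (T^[a] y) ≤ ε / 2 := by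
    rw [← Function.iterate_add_apply, show m - k + (a + k) = a + m by omega,
      Function.iterate_add_apply]
    exact (dist_iterate_le hT a _ _).trans (Metric.mem_ball.1 hmy).le
  calc dist (T^[n] y) (T^[r] y)
      ≤ dist (T^[n] y) (T^[m - k] (T^[n + k] y))
        + dist (T^[m - k] (T^[n + k] y)) (T^[m - k] (T^[r + k] y))
        + dist (T^[m - k] (T^[r + k] y)) (T^[r] y) := dist_triangle4 _ _ _ _
    _ ≤ ε / 2 + dist (T^[n + k] y) (T^[r + k] y) + ε / 2 := by
        gcongr
        · rw [dist_comm]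
          exact return_dist n
        · exact dist_iterate_le hT _ _ _
        · exact return_dist r
    _ = dist (T^[n + k] y) (T^[r + k] y) + ε := by ring

theorem almostEventuallyPeriodic_of_mapClusterPt (hT : LipschitzWith 1 T) {x y : X}
    (hy : MapClusterPt y atTop fun n => T^[n] x)
    (hper : ∀ ε > (0 : ℝ), ∃ p, 0 < p ∧ ∀ k, dist (T^[p * k] y) y ≤ ε) :
    AlmostEventuallyPeriodic T x := by
  intro ε hε
  obtain ⟨p, hp, hpy⟩ := hper (ε / 3) (by positivity)
  obtain ⟨M, hM⟩ := (mapClusterPt_iff_frequently.1 hy _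
    (Metric.ball_mem_nhds y (show 0 < ε / 3 by positivity))).exists
  have hM : dist (T^[M] x) y ≤ ε / 3 := (Metric.mem_ball.1 hM).le
  refine ⟨M, p, hp, fun k => ?_⟩
  rw [add_comm, Function.iterate_add_apply]
  calc dist (T^[p * k] (T^[M] x)) (T^[M] x)
      ≤ dist (T^[p * k] (T^[M] x)) (T^[p * k] y) + dist (T^[p * k] y) y + dist y (T^[M] x) :=
        dist_triangle4 _ _ _ _
    _ ≤ ε / 3 + ε / 3 + ε / 3 := by
        gcongr
        · exact (dist_iterate_le hT _ _ _).trans hM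
        · exact hpy k
        · rwa [dist_comm]
    _ = ε := by ring

end Orbit

namespace IsometricShift

variable {X : Type*} [PseudoMetricSpace X] {b : ℕ → X}

theorem comp_mul (hb : IsometricShift b) (p : ℕ) : IsometricShift fun k => b (p * k) :=
  fun n r k => by simpa only [mul_add] using hb (p * n) (p * r) (p * k)

theorem dist_add_left (hb : IsometricShift b) (m n : ℕ) :
    dist (b (m + n)) (b m) = dist (b n) (b 0) := by
  simpa only [zero_add, add_comm n] using hb n 0 m

theorem dist_le_of_isLUB (hb : IsometricShift b) {D : ℝ}
    (hD : IsLUB (Set.range fun k => dist (b k) (b 0)) D) (m n : ℕ) : dist (b m) (b n) ≤ D := by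
  wlog hnm : n ≤ m generalizing m n
  · rw [dist_comm]
    exact this n m (by omega)
  obtain ⟨t, rfl⟩ := Nat.exists_eq_add_of_le hnm
  rw [hb.dist_add_left]
  exact hD.1 ⟨t, rfl⟩

theorem exists_limit_sequence (hb : IsometricShift b) {K : Set X} (hK : IsCompact K)
    (hbK : ∀ n, b n ∈ K) {D : ℝ} (hD : IsLUB (Set.range fun k => dist (b k) (b 0)) D) :
    ∃ c : ℕ → X, (∀ n r k, dist (c (n + k)) (b (r + k)) = dist (c n) (b r)) ∧
      (∀ n r, dist (c n) (b r) ≤ D) ∧ dist (c 0) (b 0) = D ∧ c 0 ∈ closure (Set.range b) := by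
  obtain ⟨d, -, -, hdD, hd⟩ := hD.exists_seq_monotone_tendsto (Set.range_nonempty _)
  choose k hk using hd
  obtain ⟨c, -, φ, hφ, hc⟩ := (isCompact_univ_pi fun _ : ℕ => hK).tendsto_subseq
    (x := fun i n => b (n + k i)) fun i n _ => hbK _
  replace hc (n : ℕ) : Tendsto (fun i => b (n + k (φ i))) atTop (𝓝 (c n)) :=
    tendsto_pi_nhds.1 hc n
  have dist_tendsto (n r : ℕ) :
      Tendsto (fun i => dist (b (n + k (φ i))) (b r)) atTop (𝓝 (dist (c n) (b r))) :=
    (hc n).dist tendsto_const_nhds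
  refine ⟨c, fun n r t => ?_, fun n r => ?_, ?_, ?_⟩
  · refine tendsto_nhds_unique (dist_tendsto (n + t) (r + t)) ((dist_tendsto n r).congr fun i => ?_)
    rw [add_right_comm]
    exact (hb _ r t).symm
  · exact le_of_tendsto' (dist_tendsto n r) fun i => hb.dist_le_of_isLUB hD _ _
  · refine tendsto_nhds_unique (dist_tendsto 0 0) ((hdD.comp hφ.tendsto_atTop).congr fun i => ?_)
    rw [zero_add]
    exact (hk _).symm
  · exact mem_closure_of_tendsto (hc 0) (Eventually.of_forall fun i => ⟨_, rfl⟩)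

end IsometricShift

theorem exists_dvd_chain {Q : ℕ → ℕ → Prop}
    (step : ∀ p, 0 < p → ∃ m p', 0 < p' ∧ p ∣ m ∧ p ∣ p' ∧ ∀ k, Q p (m + p' * k)) :
    ∃ p u : ℕ → ℕ, (∀ i, 0 < p i) ∧
      ∀ i j, i < j → ∃ n, u j = u i + n ∧ p i ∣ n ∧ Q (p i) n := by
  choose! m next next_pos dvd_m dvd_next hQ using step
  let p (i : ℕ) : ℕ := next^[i] 1
  have p_succ (i : ℕ) : p (i + 1) = next (p i) := Function.iterate_succ_apply' next i 1
  have p_pos (i : ℕ) : 0 < p i := by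
    induction i with
    | zero => exact one_pos
    | succ i ih => exact p_succ i ▸ next_pos _ ih
  have p_dvd {i j : ℕ} (hij : i ≤ j) : p i ∣ p j := by
    induction j, hij using Nat.le_induction with
    | base => exact dvd_rfl
    | succ j _ ih => exact ih.trans (p_succ j ▸ dvd_next _ (p_pos j))
  let u (j : ℕ) : ℕ := ∑ r ∈ Finset.range j, m (p r)
  have u_succ (j : ℕ) : u (j + 1) = u j + m (p j) := Finset.sum_range_succ _ _
  have u_eq (i j : ℕ) (hij : i + 1 ≤ j) : ∃ k, u j = u i + (m (p i) + p (i + 1) * k) := by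
    induction j, hij using Nat.le_induction with
    | base => exact ⟨0, u_succ i⟩
    | succ j hij ih =>
      obtain ⟨k, hk⟩ := ih
      obtain ⟨k', hk'⟩ := (p_dvd hij).trans (dvd_m _ (p_pos j))
      exact ⟨k + k', by rw [u_succ, hk, hk']; ring⟩
  refine ⟨p, u, p_pos, fun i j hij => ?_⟩
  obtain ⟨k, hk⟩ := u_eq i j hij
  exact ⟨_, hk, dvd_add (dvd_m _ (p_pos i)) ((p_dvd i.le_succ).mul_right k),
    p_succ i ▸ hQ _ (p_pos i) k⟩

section Norming

variable {E : Type*} [NormedAddCommGroup E] [NormedSpace ℝ E]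

/-- A set of functionals in the dual unit ball through which every norm is attained. -/
structure IsNorming (F : Set (StrongDual ℝ E)) : Prop where
  norm_le_one : ∀ f ∈ F, ‖f‖ ≤ 1
  exists_apply_eq_norm : ∀ y, ∃ f ∈ F, f y = ‖y‖

theorem IsNorming.apply_le_norm {F : Set (StrongDual ℝ E)} (hF : IsNorming F) {f : StrongDual ℝ E}
    (hf : f ∈ F) (y : E) : f y ≤ ‖y‖ :=
  (le_abs_self _).trans <| (f.le_opNorm y).trans <|
    mul_le_of_le_one_left (norm_nonneg y) (hF.norm_le_one f hf)

/-- By pigeonhole, two times `e < l` have the same functionals attaining the diameter `D` among the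
differences `c a - b e`; then moving `b` from `l` to `e` preserves the distance `D`. -/
theorem exists_pos_forall_dist_mul_eq {F : Set (StrongDual ℝ E)} (hF : IsNorming F)
    (hfin : F.Finite) {b c : ℕ → E} {D : ℝ}
    (hshift : ∀ n r k, dist (c (n + k)) (b (r + k)) = dist (c n) (b r))
    (hle : ∀ n r, dist (c n) (b r) ≤ D) (heq : dist (c 0) (b 0) = D) :
    ∃ p, 0 < p ∧ ∀ k, dist (c (p * k)) (b 0) = D := by
  simp only [dist_eq_norm] at hshift hle heq
  let attaining (r : ℕ) : Set (StrongDual ℝ E) := {f ∈ F | ∃ n, f (c n - b r) = D}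
  obtain ⟨e, -, l, -, hel, hatt⟩ := Set.infinite_univ.exists_lt_map_eq_of_mapsTo
    (f := attaining) (t := {A | A ⊆ F}) (fun r _ => Set.sep_subset _ _) hfin.finite_subsets
  obtain ⟨p, hp, rfl⟩ : ∃ p, 0 < p ∧ l = e + p := ⟨l - e, by omega, by omega⟩
  refine ⟨p, hp, fun k => ?_⟩
  rw [dist_eq_norm]
  induction k with
  | zero => exact heq
  | succ k ih =>
    have norm_l : ‖c (p * k + (e + p)) - b (e + p)‖ = D := by
      rw [← ih, ← hshift (p * k) 0 (e + p), zero_add]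
    obtain ⟨f, hf, hfl⟩ := hF.exists_apply_eq_norm (c (p * k + (e + p)) - b (e + p))
    have mem_l : f ∈ attaining (e + p) := ⟨hf, _, hfl.trans norm_l⟩
    obtain ⟨-, n, hn⟩ := hatt ▸ mem_l
    have lower : D ≤ f (c (p * k + (e + p)) - b e) := by
      have := (hF.apply_le_norm hf (c n - b (e + p))).trans (hle n (e + p))
      simp only [map_sub] at *
      linarith
    refine (hle _ 0).antisymm (lower.trans ?_)
    calc f (c (p * k + (e + p)) - b e)
        ≤ ‖c (p * k + (e + p)) - b e‖ := hF.apply_le_norm hf _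
      _ = ‖c (p * (k + 1) + e) - b (0 + e)‖ := by
          rw [zero_add]
          congr 3
          ring
      _ = ‖c (p * (k + 1)) - b 0‖ := hshift _ _ _

theorem IsometricShift.exists_forall_le_dist {F : Set (StrongDual ℝ E)} (hF : IsNorming F)
    (hfin : F.Finite) {b : ℕ → E} (hb : IsometricShift b) {K : Set E} (hK : IsCompact K)
    (hbK : ∀ n, b n ∈ K) {D : ℝ} (hD : IsLUB (Set.range fun k => dist (b k) (b 0)) D) {δ : ℝ}
    (hδ : 0 < δ) : ∃ m p, 0 < p ∧ ∀ k, D - δ ≤ dist (b (m + p * k)) (b 0) := by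
  obtain ⟨c, hshift, hle, heq, hclosure⟩ := hb.exists_limit_sequence hK hbK hD
  obtain ⟨p, hp, hpD⟩ := exists_pos_forall_dist_mul_eq hF hfin hshift hle heq
  obtain ⟨_, ⟨m, rfl⟩, hm⟩ := Metric.mem_closure_iff.1 hclosure δ hδ
  refine ⟨m, p, hp, fun k => ?_⟩
  have shifted := hshift 0 m (p * k)
  rw [zero_add] at shifted
  linarith [dist_triangle (c (p * k)) (b (m + p * k)) (b 0), hpD k]

/-- Label each pair `i < j` by a functional attaining `‖y j - y i‖`. If all the radii were larger
than `2 * δ`, no two consecutive pairs `i < j < k` could share a label, so that the sets of labels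
used from `i` on to the right would be pairwise distinct. -/
theorem IsNorming.exists_radius_le {F : Set (StrongDual ℝ E)} (hF : IsNorming F)
    (hfin : F.Finite) {y : ℕ → E} {r : ℕ → ℝ} {δ : ℝ}
    (hlow : ∀ i j, i < j → r i - δ ≤ dist (y j) (y i))
    (hupp : ∀ i j, i < j → dist (y j) (y i) ≤ r i) : ∃ i, r i ≤ 2 * δ := by
  by_contra! hr
  simp only [dist_eq_norm] at hlow hupp
  choose label label_mem hlabel using fun i j => hF.exists_apply_eq_norm (y j - y i)
  obtain ⟨i, -, j, -, hij, heq⟩ := Set.infinite_univ.exists_lt_map_eq_of_mapsTo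
    (f := fun i => {f | ∃ j, i < j ∧ label i j = f}) (t := {A | A ⊆ F})
    (fun i _ => by rintro _ ⟨j, -, rfl⟩; exact label_mem i j) hfin.finite_subsets
  have label_ij : label i j ∈ {f | ∃ j, i < j ∧ label i j = f} := ⟨j, hij, rfl⟩
  obtain ⟨k, hjk, hlabel_eq⟩ := heq ▸ label_ij
  have hjk_attained := hlabel j k
  rw [hlabel_eq] at hjk_attained
  have sum_le := (hF.apply_le_norm (label_mem i j) (y k - y i)).trans (hupp i k (hij.trans hjk))
  have hij_attained := hlabel i j
  simp only [map_sub] at sum_le hij_attained hjk_attained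
  linarith [hlow i j hij, hlow j k hjk, hr j]

theorem IsometricShift.exists_forall_dist_le {F : Set (StrongDual ℝ E)} (hF : IsNorming F)
    (hfin : F.Finite) {b : ℕ → E} (hb : IsometricShift b) {K : Set E} (hK : IsCompact K)
    (hbK : ∀ n, b n ∈ K) {ε : ℝ} (hε : 0 < ε) :
    ∃ p, 0 < p ∧ ∀ k, dist (b (p * k)) (b 0) ≤ ε := by
  let D (p : ℕ) : ℝ := ⨆ k, dist (b (p * k)) (b 0)
  have hD (p : ℕ) : IsLUB (Set.range fun k => dist (b (p * k)) (b 0)) (D p) := by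
    obtain ⟨C, hC⟩ := Metric.isBounded_iff.1 hK.isBounded
    exact isLUB_ciSup ⟨C, by rintro _ ⟨k, rfl⟩; exact hC (hbK _) (hbK _)⟩
  obtain ⟨p, u, p_pos, chain⟩ := exists_dvd_chain
    (Q := fun p n => D p - ε / 2 ≤ dist (b n) (b 0)) fun p hp => by
      obtain ⟨m, p', hp', hm⟩ := (hb.comp_mul p).exists_forall_le_dist hF hfin hK
        (fun n => hbK _) (hD p) (half_pos hε)
      exact ⟨p * m, p * p', Nat.mul_pos hp hp', dvd_mul_right _ _, dvd_mul_right _ _, fun k => by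
        simpa only [mul_add, mul_assoc, mul_zero] using hm k⟩
  obtain ⟨i, hi⟩ := hF.exists_radius_le hfin (y := fun i => b (u i)) (r := fun i => D (p i))
    (δ := ε / 2)
    (fun i j hij => by
      obtain ⟨n, hn, -, hQ⟩ := chain i j hij
      rwa [hn, hb.dist_add_left])
    (fun i j hij => by
      obtain ⟨_, hn, ⟨k, rfl⟩, -⟩ := chain i j hij
      rw [hn, hb.dist_add_left]
      exact (hD (p i)).1 ⟨k, rfl⟩)
  exact ⟨p i, p_pos i, fun k => ((hD (p i)).1 ⟨k, rfl⟩).trans (by linarith)⟩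

theorem almostEventuallyPeriodic_of_isometry {F : Set (StrongDual ℝ E)} (hF : IsNorming F)
    (hfin : F.Finite) {X : Type*} [PseudoMetricSpace X] [CompactSpace X] {Φ : X → E}
    (hΦ : Isometry Φ) {T : X → X} (hT : LipschitzWith 1 T) (x : X) :
    AlmostEventuallyPeriodic T x := by
  obtain ⟨y, hy⟩ := exists_clusterPt_of_compactSpace (map (fun n => T^[n] x) atTop)
  refine almostEventuallyPeriodic_of_mapClusterPt hT hy fun ε hε => ?_
  have shift := isometricShift_iterate hT (mapClusterPt_iterate_self hT hy)
  have shiftΦ : IsometricShift fun n => Φ (T^[n] y) := fun n r k => by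
    simpa only [hΦ.dist_eq] using shift n r k
  simpa only [hΦ.dist_eq, Function.iterate_zero, id] using shiftΦ.exists_forall_dist_le hF hfin
    (isCompact_range hΦ.continuous) (fun n => Set.mem_range_self _) hε

end Norming

end AlmostPeriodicity

/-! ### Norming sets of polyhedral norms -/

section PolyhedralNorm

variable {E : Type*} [NormedAddCommGroup E] [NormedSpace ℝ E]

theorem apply_eq_one_of_extremePoints [FiniteDimensional ℝ E] {f f₀ : StrongDual ℝ E}
    (hf₀ : ‖f₀‖ ≤ 1)
    (hf : ∀ e ∈ (Metric.closedBall (0 : E) 1).extremePoints ℝ, f₀ e = 1 → f e = 1) {u : E}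
    (hu : ‖u‖ ≤ 1) (hu₀ : f₀ u = 1) : f u = 1 := by
  have le_one {x : E} (hx : x ∈ Metric.closedBall (0 : E) 1) : f₀ x ≤ 1 :=
    (le_abs_self _).trans <| (f₀.le_opNorm x).trans <|
      mul_le_one₀ hf₀ (norm_nonneg x) (mem_closedBall_zero_iff.1 hx)
  let face : Set E := f₀.toExposed (Metric.closedBall 0 1)
  have exposed : IsExposed ℝ (Metric.closedBall (0 : E) 1) face :=
    ContinuousLinearMap.toExposed.isExposed
  have u_mem : u ∈ face :=
    ⟨mem_closedBall_zero_iff.2 hu, fun x hx => (le_one hx).trans_eq hu₀.symm⟩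
  have eq_one {x : E} (hx : x ∈ face) : f₀ x = 1 :=
    (le_one hx.1).antisymm (hu₀.symm.trans_le (hx.2 u u_mem.1))
  have closed_convex : face ⊆ {x | f x = 1} := by
    rw [← closure_convexHull_extremePoints (exposed.isCompact (isCompact_closedBall 0 1))
      (exposed.convex (convex_closedBall 0 1))]
    refine closure_minimal (convexHull_min (fun e he => ?_)
      (convex_hyperplane f.toLinearMap.isLinear 1)) (isClosed_eq f.continuous continuous_const)
    exact hf e (exposed.isExtreme.extremePoints_subset_extremePoints he) (eq_one he.1)
  exact closed_convex u_mem

/-- It suffices to keep one functional of the dual unit ball for each set of extreme points on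
which such a functional takes the value `1`. -/
theorem exists_finite_isNorming [FiniteDimensional ℝ E]
    (h : ((Metric.closedBall (0 : E) 1).extremePoints ℝ).Finite) :
    ∃ F : Set (StrongDual ℝ E), F.Finite ∧ IsNorming F := by
  let contact (f : StrongDual ℝ E) : Set E :=
    {e ∈ (Metric.closedBall (0 : E) 1).extremePoints ℝ | f e = 1}
  obtain ⟨F, hFball, hF⟩ := Set.exists_subset_bijOn {f : StrongDual ℝ E | ‖f‖ ≤ 1} contact
  refine ⟨F, hF.finite_iff_finite.2 (h.finite_subsets.subset ?_), hFball, fun y => ?_⟩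
  · rintro _ ⟨f, -, rfl⟩
    exact Set.sep_subset _ _
  obtain ⟨f₀, hf₀, hf₀y⟩ := exists_dual_vector'' ℝ y
  obtain ⟨f, hf, hcontact⟩ := hF.surjOn ⟨f₀, hf₀, rfl⟩
  refine ⟨f, hf, ?_⟩
  rcases eq_or_ne y 0 with rfl | hy
  · simp
  have hy' : ‖y‖ ≠ 0 := norm_ne_zero_iff.2 hy
  have unit : f (‖y‖⁻¹ • y) = 1 :=
    apply_eq_one_of_extremePoints hf₀ (fun e he he₀ => (hcontact.ge ⟨he, he₀⟩).2)
      (by simp [norm_smul, hy']) (by simp [hf₀y, hy'])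
  rwa [map_smul, smul_eq_mul, inv_mul_eq_one₀ hy', eq_comm] at unit

end PolyhedralNorm

/-! ### Finite approximation of commuting nonexpansive maps -/

section FiniteApproximation

universe u

/-- The counter `n` read on the graph `0 → 1 → ⋯ → M → ⋯ → M + p - 1 → M`, a path followed by a
cycle of length `p`. -/
def foldCounter (M p n : ℕ) : ℕ :=
  if n < M then n else M + (n - M) % p

theorem foldCounter_lt (M : ℕ) {p : ℕ} (hp : 0 < p) (n : ℕ) : foldCounter M p n < M + p := by
  unfold foldCounter
  split_ifs with hn
  · omega
  · exact Nat.add_lt_add_left (Nat.mod_lt _ hp) M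

theorem foldCounter_foldCounter_add_one (M p n : ℕ) :
    foldCounter M p (foldCounter M p n + 1) = foldCounter M p (n + 1) := by
  rcases lt_or_ge n M with hn | hn
  · simp only [foldCounter, if_pos hn]
  obtain ⟨k, rfl⟩ := Nat.exists_eq_add_of_le hn
  simp only [foldCounter, add_assoc, not_lt_of_ge (Nat.le_add_right M _), if_false,
    Nat.add_sub_cancel_left, Nat.mod_add_mod]

theorem foldr_replicate_eq_iterate {A X : Type*} (T : A → X → X) [LeftCommutative T]
    (a : A) (n : ℕ) (x : X) :
    (Multiset.replicate n a).foldr T x = (T a)^[n] x := by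
  induction n with
  | zero => rfl
  | succ n ih =>
    rw [Multiset.replicate_succ, Multiset.foldr_cons, ih, Function.iterate_succ_apply']

variable {X : Type*} [PseudoMetricSpace X]

theorem dist_iterate_foldCounter_le {T : X → X} (hT : LipschitzWith 1 T) {x : X} {M p : ℕ} {ε : ℝ}
    (h : ∀ k, dist (T^[M + p * k] x) (T^[M] x) ≤ ε) (n : ℕ) :
    dist (T^[n] x) (T^[foldCounter M p n] x) ≤ ε := by
  unfold foldCounter
  split_ifs with hn
  · rw [dist_self]
    exact dist_nonneg.trans (h 0)
  let r := (n - M) % p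
  calc dist (T^[n] x) (T^[M + r] x)
      = dist (T^[r] (T^[M + p * ((n - M) / p)] x)) (T^[r] (T^[M] x)) := by
        have := Nat.div_add_mod (n - M) p
        rw [← Function.iterate_add_apply, ← Function.iterate_add_apply, add_comm M r,
          show r + (M + p * ((n - M) / p)) = n by omega]
    _ ≤ dist (T^[M + p * ((n - M) / p)] x) (T^[M] x) := dist_iterate_le hT r _ _
    _ ≤ ε := h _

variable {A : Type u} {T : A → X → X} [LeftCommutative T]

theorem dist_foldr_le (hT : ∀ a, LipschitzWith 1 (T a)) (t : Multiset A) (x y : X) :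
    dist (t.foldr T x) (t.foldr T y) ≤ dist x y := by
  induction t using Multiset.induction with
  | empty => rfl
  | cons a t ih =>
    rw [Multiset.foldr_cons, Multiset.foldr_cons]
    exact (dist_iterate_le (hT a) 1 _ _).trans ih

theorem dist_foldr_sum_replicate_le (hT : ∀ a, LipschitzWith 1 (T a)) (x : X) (m n : A → ℕ)
    (s : Finset A) :
    dist ((∑ a ∈ s, Multiset.replicate (m a) a).foldr T x)
      ((∑ a ∈ s, Multiset.replicate (n a) a).foldr T x) ≤
      ∑ a ∈ s, dist ((T a)^[m a] x) ((T a)^[n a] x) := by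
  classical
  induction s using Finset.induction_on with
  | empty => simp
  | insert a s ha ih =>
    rw [Finset.sum_insert ha, Finset.sum_insert ha, Finset.sum_insert ha]
    set u := ∑ a ∈ s, Multiset.replicate (m a) a
    set v := ∑ a ∈ s, Multiset.replicate (n a) a
    refine (dist_triangle _ ((Multiset.replicate (n a) a + u).foldr T x) _).trans (add_le_add ?_ ?_)
    · rw [add_comm _ u, add_comm _ u, Multiset.foldr_add, Multiset.foldr_add,
        foldr_replicate_eq_iterate, foldr_replicate_eq_iterate]
      exact dist_foldr_le hT u _ _
    · rw [Multiset.foldr_add, Multiset.foldr_add]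
      exact (dist_foldr_le hT _ _ _).trans ih

theorem dist_foldr_foldCounter_le [Fintype A] [DecidableEq A] (hT : ∀ a, LipschitzWith 1 (T a))
    {x : X} {M p : A → ℕ} {ε : ℝ}
    (h : ∀ a k, dist ((T a)^[M a + p a * k] x) ((T a)^[M a] x) ≤ ε) (t : Multiset A) :
    dist (t.foldr T x)
      ((∑ a, Multiset.replicate (foldCounter (M a) (p a) (t.count a)) a).foldr T x) ≤
      Fintype.card A * ε := by
  have sum_count : ∑ a, Multiset.replicate (t.count a) a = t := by
    ext b
    simp [Multiset.count_sum', Multiset.count_replicate]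
  calc dist (t.foldr T x) _
      ≤ ∑ a, dist ((T a)^[t.count a] x) ((T a)^[foldCounter (M a) (p a) (t.count a)] x) := by
        simpa only [sum_count] using dist_foldr_sum_replicate_le hT x t.count
          (fun a => foldCounter (M a) (p a) (t.count a)) Finset.univ
    _ ≤ ∑ _a : A, ε :=
        Finset.sum_le_sum fun a _ => dist_iterate_foldCounter_le (hT a) (h a) _
    _ = Fintype.card A * ε := by rw [Finset.sum_const, Finset.card_univ, nsmul_eq_mul]

/-- The finite model records how often each map has been applied, folding the counter of `T a` onto
the almost period of the orbit of `x₁` under `T a`. -/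
theorem exists_finite_approximation [Finite A] (hT : ∀ a, LipschitzWith 1 (T a)) {x₁ : X}
    (hper : ∀ a, AlmostEventuallyPeriodic (T a) x₁) {ε : ℝ} (hε : 0 < ε) :
    ∃ (S : Type u) (_ : Finite S) (T' : A → S → S) (π : S → X) (R : X → S → Prop) (s₁ : S),
      R x₁ s₁ ∧ (∀ a x s, R x s → R (T a x) (T' a s)) ∧ ∀ x s, R x s → dist x (π s) ≤ ε := by
  classical
  let _ := Fintype.ofFinite A
  choose M p hp hMp using fun a => hper a (ε / (Fintype.card A + 1)) (by positivity)
  let fold (a : A) (n : ℕ) : Fin (M a + p a) :=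
    ⟨foldCounter (M a) (p a) n, foldCounter_lt _ (hp a) n⟩
  let state (t : Multiset A) (a : A) : Fin (M a + p a) := fold a (t.count a)
  let π (s : ∀ a, Fin (M a + p a)) : X := (∑ a, Multiset.replicate (s a) a).foldr T x₁
  refine ⟨∀ a, Fin (M a + p a), inferInstance,
    fun a s => Function.update s a (fold a (s a + 1)), π,
    fun x s => ∃ t : Multiset A, x = t.foldr T x₁ ∧ s = state t, state 0, ⟨0, rfl, rfl⟩, ?_, ?_⟩
  · rintro a _ _ ⟨t, rfl, rfl⟩
    refine ⟨a ::ₘ t, (Multiset.foldr_cons ..).symm, funext fun b => ?_⟩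
    rcases eq_or_ne b a with rfl | hb
    · simp only [Function.update_self, state, fold, Multiset.count_cons_self,
        foldCounter_foldCounter_add_one]
    · simp only [state, Function.update_of_ne hb, Multiset.count_cons_of_ne hb]
  · rintro _ _ ⟨t, rfl, rfl⟩
    calc dist (t.foldr T x₁) (π (state t))
        ≤ Fintype.card A * (ε / (Fintype.card A + 1)) := dist_foldr_foldCounter_le hT hMp t
      _ = Fintype.card A * ε / (Fintype.card A + 1) := (mul_div_assoc _ _ _).symm
      _ ≤ ε := by
          rw [div_le_iff₀ (by positivity)]
          linarith

end FiniteApproximation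

/-! ### Games with commuting nonexpansive transitions -/

section UniformValue

universe u

variable {I J : Type*} [Fintype I] [Nonempty I] [Fintype J] [Nonempty J]

theorem exists_uniform_value_of_almostEventuallyPeriodic {X : Type*} [PseudoMetricSpace X]
    {q : X → I → J → X} (hq : ∀ i j, LipschitzWith 1 fun x => q x i j)
    (hcomm : ∀ x i i' j j', q (q x i j) i' j' = q (q x i' j') i j) {g : X → I → J → ℝ}
    (hg : ∀ i j, UniformContinuous fun x => g x i j) {x₁ : X}
    (hper : ∀ i j, AlmostEventuallyPeriodic (fun x => q x i j) x₁) :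
    ∃ v, Guarantees1 q g x₁ v ∧ Guarantees2 q g x₁ v := by
  refine exists_uniform_value_of_forall_exists_secures fun ε hε => ?_
  obtain ⟨δ, hδ, hgδ⟩ := Metric.uniformContinuous_iff_le.1
    (uniformContinuous_pi.2 fun a : I × J => hg a.1 a.2) (ε / 2) (half_pos hε)
  let T (a : I × J) (x : X) : X := q x a.1 a.2
  have : LeftCommutative T := ⟨fun _ _ _ => hcomm ..⟩
  obtain ⟨S, _, T', π, R, s₁, hR, step, hclose⟩ :=
    exists_finite_approximation (T := T) (fun a => hq a.1 a.2) (fun a => hper a.1 a.2) hδ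
  have payoff_close {x : X} {s : S} (h : R x s) (i : I) (j : J) :
      |g x i j - g (π s) i j| ≤ ε / 2 :=
    (dist_le_pi_dist (fun a : I × J => g x a.1 a.2) (fun a => g (π s) a.1 a.2) (i, j)).trans
      (hgδ (hclose x s h))
  obtain ⟨v, hv₁, hv₂⟩ := exists_secures_of_finite (fun s i j => T' (i, j) s)
    (fun s i j => g (π s) i j) s₁ (half_pos hε)
  refine ⟨v, ?_, ?_⟩
  · refine ((hv₁.mul_add zero_le_one (-(ε / 2))).of_rel (R := fun s x => R x s)
      (fun s x i j h => step (i, j) x s h) (fun s x i j h => ?_) hR).mono (by linarith)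
    linarith [abs_le.1 (payoff_close h i j)]
  · refine ((hv₂.mul_add zero_le_one (ε / 2)).of_rel (R := R)
      (fun x s i j h => step (i, j) x s h) (fun x s i j h => ?_) hR).mono (by linarith)
    linarith [abs_le.1 (payoff_close h i j)]

theorem exists_uniform_value_of_isometry {X E : Type*} [PseudoMetricSpace X] [CompactSpace X]
    [NormedAddCommGroup E] [NormedSpace ℝ E] [FiniteDimensional ℝ E]
    (hpoly : ((Metric.closedBall (0 : E) 1).extremePoints ℝ).Finite) {Φ : X → E}
    (hΦ : Isometry Φ) {q : X → I → J → X} (hq : ∀ i j, LipschitzWith 1 fun x => q x i j)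
    (hcomm : ∀ x i i' j j', q (q x i j) i' j' = q (q x i' j') i j) {g : X → I → J → ℝ}
    (hg : ∀ i j, Continuous fun x => g x i j) (x₁ : X) :
    ∃ v, Guarantees1 q g x₁ v ∧ Guarantees2 q g x₁ v := by
  obtain ⟨F, hfin, hF⟩ := exists_finite_isNorming hpoly
  exact exists_uniform_value_of_almostEventuallyPeriodic hq hcomm
    (fun i j => CompactSpace.uniformContinuous_of_continuous (hg i j))
    fun i j => almostEventuallyPeriodic_of_isometry hF hfin hΦ (hq i j) x₁

theorem exists_linearEquiv_norm_eq {𝕜 : Type*} {E : Type u} [NormedField 𝕜] [AddCommGroup E]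
    [Module 𝕜 E] (N : Seminorm 𝕜 E) (hN : ∀ y, N y = 0 → y = 0) :
    ∃ (E' : Type u) (_ : NormedAddCommGroup E') (_ : NormedSpace 𝕜 E') (L : E ≃ₗ[𝕜] E'),
      ∀ y, ‖L y‖ = N y := by
  let _ : Norm E := ⟨N⟩
  have core : NormedSpace.Core 𝕜 E :=
    { norm_nonneg := apply_nonneg N
      norm_smul := map_smul_eq_mul N
      norm_triangle := map_add_le_add N
      norm_eq_zero_iff := fun y => ⟨hN y, fun h => h ▸ map_zero N⟩ }
  let _ := NormedAddCommGroup.ofCore core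
  exact ⟨E, _, .ofCore core, .refl 𝕜 E, fun _ => rfl⟩

theorem commutative_stochastic_game_has_uniform_value_polyhedral_general {E : Type*}
    [AddCommGroup E] [Module ℝ E] [TopologicalSpace E] [IsTopologicalAddGroup E]
    [ContinuousSMul ℝ E] [T2Space E] [FiniteDimensional ℝ E] (N : Seminorm ℝ E)
    (hN : ∀ y, N y = 0 → y = 0) (hpoly : ({y | N y ≤ 1}.extremePoints ℝ).Finite) {X : Set E}
    (hX : IsCompact X) {q : X → I → J → X}
    (hLip : ∀ i j x y, N ((q x i j : E) - q y i j) ≤ N ((x : E) - y))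
    (hcomm : ∀ x i i' j j', q (q x i j) i' j' = q (q x i' j') i j) {g : X → I → J → ℝ}
    (hg : ∀ i j, Continuous fun x => g x i j) (x₁ : X) :
    ∃ v, Guarantees1 q g x₁ v ∧ Guarantees2 q g x₁ v := by
  obtain ⟨E', _, _, L, hL⟩ := exists_linearEquiv_norm_eq N hN
  have : FiniteDimensional ℝ E' := L.finiteDimensional
  have : CompactSpace X := isCompact_iff_compactSpace.1 hX
  have emb : IsEmbedding fun x : X => L x :=
    L.toContinuousLinearEquiv.toHomeomorph.isEmbedding.comp .subtypeVal
  let _ : MetricSpace X := emb.comapMetricSpace _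
  have dist_eq (x y : X) : dist x y = N ((x : E) - y) := by
    rw [← hL, map_sub, ← dist_eq_norm]
    rfl
  have ball_eq : Metric.closedBall (0 : E') 1 = L '' {y | N y ≤ 1} := by
    ext z
    simp [← hL, L.image_eq_preimage_symm]
  refine exists_uniform_value_of_isometry (Φ := fun x : X => L x) ?_ emb.to_isometry
    (fun i j => ?_) hcomm hg x₁
  · rw [ball_eq, ← image_extremePoints]
    exact hpoly.image L
  · exact LipschitzWith.mk_one fun x y => by simpa only [dist_eq] using hLip i j x y

end UniformValue

/-- A deterministic commutative stochastic game on a compact subset of `ℝ^m`, with finite action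
sets, a transition that is `1`-Lipschitz for a polyhedral norm `N` (a norm whose closed unit
ball has finitely many extreme points) and a continuous payoff, has a uniform value from every
initial state. -/
theorem commutative_stochastic_game_has_uniform_value_polyhedral
    {m : ℕ} {I J : Type*} [Fintype I] [Nonempty I] [Fintype J] [Nonempty J]
    (N : Seminorm ℝ (Fin m → ℝ)) (hN : ∀ y, N y = 0 → y = 0)
    (hpoly : (Set.extremePoints ℝ {y : Fin m → ℝ | N y ≤ 1}).Finite)
    (X : Set (Fin m → ℝ)) (hXne : X.Nonempty) (hXc : IsCompact X)
    (q : X → I → J → X)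
    (hLip : ∀ (i : I) (j : J) (x y : X),
      N ((q x i j : Fin m → ℝ) - (q y i j : Fin m → ℝ)) ≤ N ((x : Fin m → ℝ) - (y : Fin m → ℝ)))
    (hcomm : ∀ (x : X) (i i' : I) (j j' : J), q (q x i j) i' j' = q (q x i' j') i j)
    (g : X → I → J → ℝ)
    (hg01 : ∀ x i j, g x i j ∈ Set.Icc (0 : ℝ) 1)
    (hgc : ∀ i j, Continuous fun x => g x i j)
    (x₁ : X) :
    ∃ v : ℝ, Guarantees1 q g x₁ v ∧ Guarantees2 q g x₁ v :=
  commutative_stochastic_game_has_uniform_value_polyhedral_general N hN hpoly hXc hLip hcomm hgc x₁
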